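/- Let k be a nonnegative integer and let f = f₀ + M₂* f₁ with f₀ ∈ M_{3k+2}(Γ₀⁺(3),χ^k) and f₁ ∈ M_{3k}(Γ₀⁺(3),χ^k), where M₂*(z) = (3E₂(3z)+E₂(z))/4. Suppose f is extremal, i.e. v_∞(f) = k (which equals dim 𝑀̃_{3k+2}^{≤1}(Γ₀⁺(3),χ^k) − 1). Let M₂(z) = (3E₂(3z) − E₂(z))/2, M₄(z) = (9E₄(3z)+E₄(z))/10 (= M₂²), M₆(z) = q ∏_{n≥1}(1−qⁿ)⁶(1−q^{3n})⁶, and P(z) = e^{πikz} ∏_{n≥1}(1−qⁿ)^{3k}(1−q^{3n})^{3k} (= M₆^{k/2}). Then y := f/(P·M₂) satisfies y″(z) = −4π² ( (k/2)² M₄(z) − 18 M₆(z)/M₂(z) ) y(z) at every z ∈ ℍ with M₂(z) ≠ 0. -/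

import Mathlib

noncomputable section

open Complex Matrix Filter Topology

abbrev SL2R := Matrix.SpecialLinearGroup (Fin 2) ℝ
abbrev SL2Z := Matrix.SpecialLinearGroup (Fin 2) ℤ

/-- The upper half-plane, as a subset of `ℂ`. -/
def UHP : Set ℂ := {z : ℂ | 0 < z.im}

/-- The embedding of `SL(2,ℤ)` into `SL(2,ℝ)`. -/
def toR : SL2Z →* SL2R := Matrix.SpecialLinearGroup.map (Int.castRingHom ℝ)

/-- `SL(2,ℤ)` as a subgroup of `SL(2,ℝ)`. -/
def SL2ZR : Subgroup SL2R := Subgroup.map toR ⊤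

/-- Möbius action of a real matrix on a complex number. -/
def moeb (γ : SL2R) (z : ℂ) : ℂ :=
  ((γ.1 0 0 : ℂ) * z + (γ.1 0 1 : ℂ)) / ((γ.1 1 0 : ℂ) * z + (γ.1 1 1 : ℂ))

/-- The automorphy factor `cz + d`. -/
def jfac (γ : SL2R) (z : ℂ) : ℂ := (γ.1 1 0 : ℂ) * z + (γ.1 1 1 : ℂ)

/-- A holomorphic modular form of weight `k` and character `χ` on `Γ ≤ SL(2,ℝ)`
(for `Γ` commensurable with `SL(2,ℤ)`): holomorphic on `ℍ`, satisfying the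
transformation law, and holomorphic (bounded) at every cusp. -/
structure IsModularForm (Γ : Subgroup SL2R) (χ : SL2R → ℂ) (k : ℤ) (f : ℂ → ℂ) : Prop where
  holo : DifferentiableOn ℂ f UHP
  transform : ∀ γ ∈ Γ, ∀ z ∈ UHP, f (moeb γ z) = χ γ * jfac γ z ^ k * f z
  bdd_at_cusps : ∀ σ : SL2Z, ∃ C : ℝ, ∀ z ∈ UHP, 1 ≤ z.im →
    ‖jfac (toR σ) z ^ (-k) * f (moeb (toR σ) z)‖ ≤ C

/-- A finite-order character of `Γ`. -/
def IsCharacter (Γ : Subgroup SL2R) (χ : SL2R → ℂ) : Prop :=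
  (∀ γ ∈ Γ, ∀ δ ∈ Γ, χ (γ * δ) = χ γ * χ δ) ∧
    ∃ n : ℕ, 0 < n ∧ ∀ γ ∈ Γ, χ γ ^ n = 1

/-- `φ` is quasimodular of weight 2 and depth 1 on `Γ`, with constant `α`:
`(cz+d)⁻² φ(γz) = φ(z) + α c/(cz+d)`. -/
def IsQuasiWt2 (Γ : Subgroup SL2R) (α : ℂ) (φ : ℂ → ℂ) : Prop :=
  ∀ γ ∈ Γ, ∀ z ∈ UHP,
    (jfac γ z)⁻¹ ^ 2 * φ (moeb γ z) = φ z + α * (γ.1 1 0 : ℂ) / jfac γ z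

/-- `f` has vanishing order `ν` at the cusp `∞`, with respect to `q_N = e^{2πiz/N}`:
`q_N^{-ν}·f(z)` tends to a nonzero constant as `Im z → ∞`. -/
def VOrder (N : ℝ) (f : ℂ → ℂ) (ν : ℝ) : Prop :=
  ∃ c : ℂ, c ≠ 0 ∧ ∀ ε : ℝ, 0 < ε → ∃ Y : ℝ, ∀ z : ℂ, Y ≤ z.im →
    ‖Complex.exp (-(2 * Real.pi * Complex.I * (ν : ℂ) * z / (N : ℂ))) * f z - c‖ < ε


/-- `Γ₀(N)` as a subgroup of `SL(2,ℝ)`. -/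
def Gamma0R (N : ℕ) : Subgroup SL2R := Subgroup.map toR (CongruenceSubgroup.Gamma0 N)

/-- `q = e^{2πiz}`. -/
def qexp (z : ℂ) : ℂ := Complex.exp (2 * Real.pi * Complex.I * z)

/-- `E₂(z) = 1 - 24 ∑_{n≥1} σ₁(n) qⁿ`. -/
def E2 (z : ℂ) : ℂ :=
  1 - 24 * ∑' n : ℕ, (ArithmeticFunction.sigma 1 (n + 1) : ℂ) * qexp z ^ (n + 1)

/-- `E₄(z) = 1 + 240 ∑_{n≥1} σ₃(n) qⁿ`. -/
def E4 (z : ℂ) : ℂ :=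
  1 + 240 * ∑' n : ℕ, (ArithmeticFunction.sigma 3 (n + 1) : ℂ) * qexp z ^ (n + 1)

/-- `S₃ = (1/√3)(0 -1; 3 0)`. -/
def S3elt : SL2R :=
  ⟨!![0, -(Real.sqrt 3)⁻¹; Real.sqrt 3, 0], by
    have h : Real.sqrt 3 ≠ 0 := by positivity
    rw [Matrix.det_fin_two_of, neg_mul, inv_mul_cancel₀ h]
    norm_num⟩

/-- `R₃ = (1/√3)(3 -1; 3 0)`. -/
def R3elt : SL2R :=
  ⟨!![Real.sqrt 3, -(Real.sqrt 3)⁻¹; Real.sqrt 3, 0], by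
    have h : Real.sqrt 3 ≠ 0 := by positivity
    rw [Matrix.det_fin_two_of, neg_mul, inv_mul_cancel₀ h]
    norm_num⟩

/-- `Γ₀⁺(3) = ⟨Γ₀(3), S₃⟩`. -/
def GammaPlus3 : Subgroup SL2R :=
  Subgroup.closure ((Gamma0R 3 : Set SL2R) ∪ {S3elt})

/-- Modular forms of weight `k` with character `χ` on `Γ ≤ SL(2,ℝ)` whose only cusp
is `∞`: holomorphic on `ℍ`, transforming with `χ·(cz+d)^k`, holomorphic at `∞`. -/
def MFchar (Γ : Subgroup SL2R) (χ : SL2R → ℂ) (k : ℤ) (f : ℂ → ℂ) : Prop :=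
  DifferentiableOn ℂ f UHP ∧
    (∀ γ ∈ Γ, ∀ z ∈ UHP, f (moeb γ z) = χ γ * jfac γ z ^ k * f z) ∧
    ∃ C : ℝ, ∀ z ∈ UHP, 1 ≤ z.im → ‖f z‖ ≤ C

/-- `M₂*(z) = (3E₂(3z) + E₂(z))/4`. -/
def M2star3 (z : ℂ) : ℂ := (3 * E2 (3 * z) + E2 z) / 4

/-- `M₄(z) = (9E₄(3z) + E₄(z))/10`. -/
def M4plus3 (z : ℂ) : ℂ := (9 * E4 (3 * z) + E4 z) / 10

/-- `P(z) = e^{πikz} ∏_{n≥1} (1-qⁿ)^{3k}(1-q^{3n})^{3k}` (equal to `M₆(z)^{k/2}` where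
`M₆ = η(z)⁶η(3z)⁶`; nonvanishing on `ℍ`). -/
def Pfun3 (k : ℕ) (z : ℂ) : ℂ :=
  Complex.exp (Real.pi * Complex.I * k * z) *
    ∏' n : ℕ, ((1 - qexp z ^ (n + 1)) ^ (3 * k) * (1 - qexp z ^ (3 * (n + 1))) ^ (3 * k))


/-- `M₂(z) = (3E₂(3z) - E₂(z))/2`. -/
def M2minus3 (z : ℂ) : ℂ := (3 * E2 (3 * z) - E2 z) / 2

/-- `M₆(z) = q ∏_{n≥1}(1-qⁿ)⁶(1-q^{3n})⁶ = η(z)⁶η(3z)⁶`. -/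
def M6fun (z : ℂ) : ℂ :=
  qexp z * ∏' n : ℕ, ((1 - qexp z ^ (n + 1)) ^ 6 * (1 - qexp z ^ (3 * (n + 1))) ^ 6)

/-!
Write `θ = q d/dq` and `∂` for the Serre derivative `θ - (w/6) M₂*`. It acts on a quasimodular form
`f = f₀ + M₂* f₁` through the pair of modular coefficients `(f₀, f₁)`, so the determinant `W` of the
pairs of `f` and `∂f` is a modular form, of weight `6k + 4` for the character `χ²ᵏ`. Since `f` and
`∂f` vanish to order `k` at the cusp, so does `W`, which forces `W = C M₂² M₆ᵏ`; moreover `C ≠ 0`,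
as otherwise `f₁ / f` would be a nonconstant affine function of `z`. Cramer's rule for the pairs of
`f`, `∂f` and `∂²f` then gives a second order linear equation for `f`, whose one remaining
coefficient is a modular form `(α M₂⁴ + β M₂ M₆) M₆ᵏ`. The leading coefficients at the cusp
determine `α`, and the orders of vanishing at the elliptic point, the zero of `M₂`, show `β = 0`.
The substitution `y = f / (M₆^{k/2} M₂)` removes the first order term.
-/

namespace FrickeThree

open Metric

/-! ### The upper half-plane and the Fricke involution -/

/-- The Fricke involution `z ↦ -1/(3z)`, through which `S₃` acts on the upper half-plane. -/
def fricke (z : ℂ) : ℂ := -1 / (3 * z)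

theorem isOpen_UHP : IsOpen UHP := isOpen_lt continuous_const continuous_im

theorem ne_zero_of_mem_UHP {z : ℂ} (hz : z ∈ UHP) : z ≠ 0 := by
  rintro rfl
  simp [UHP] at hz

theorem normSq_pos_of_mem_UHP {z : ℂ} (hz : z ∈ UHP) : 0 < normSq z :=
  normSq_pos.2 (ne_zero_of_mem_UHP hz)

theorem add_intCast_mem_UHP {z : ℂ} (hz : z ∈ UHP) (n : ℤ) : z + n ∈ UHP := by
  simpa [UHP] using hz

theorem add_one_mem_UHP {z : ℂ} (hz : z ∈ UHP) : z + 1 ∈ UHP := by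
  simpa using add_intCast_mem_UHP hz 1

theorem three_mul_mem_UHP {z : ℂ} (hz : z ∈ UHP) : 3 * z ∈ UHP := by
  simpa [UHP] using hz

theorem im_fricke (z : ℂ) : (fricke z).im = z.im / (3 * normSq z) := by
  rw [fricke, mul_comm, ← div_div, div_ofNat_im, neg_div, neg_im, one_div, inv_im]
  ring

theorem fricke_mem_UHP {z : ℂ} (hz : z ∈ UHP) : fricke z ∈ UHP := by
  have := normSq_pos_of_mem_UHP hz
  have : 0 < z.im := hz
  change 0 < (fricke z).im
  rw [im_fricke]
  positivity

theorem three_mul_fricke {z : ℂ} (hz : z ∈ UHP) : 3 * fricke z = -1 / z := by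
  have := ne_zero_of_mem_UHP hz
  rw [fricke]
  field_simp

theorem hasDerivAt_fricke {z : ℂ} (hz : z ∈ UHP) : HasDerivAt fricke (1 / (3 * z ^ 2)) z := by
  have hz0 := ne_zero_of_mem_UHP hz
  refine ((hasDerivAt_const z (-1 : ℂ)).div ((hasDerivAt_id z).const_mul 3)
    (by simpa using hz0)).congr_deriv ?_
  simp only [id]
  field_simp
  ring

theorem sqrt_three_sq : (√3 : ℂ) ^ 2 = 3 := by
  exact_mod_cast Real.sq_sqrt (show (0 : ℝ) ≤ 3 by norm_num)

theorem sqrt_three_ne_zero : (√3 : ℂ) ≠ 0 := by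
  exact_mod_cast (Real.sqrt_pos.2 three_pos).ne'

theorem sqrt_three_mul_ne_zero {z : ℂ} (hz : z ∈ UHP) : (√3 : ℂ) * z ≠ 0 :=
  mul_ne_zero sqrt_three_ne_zero (ne_zero_of_mem_UHP hz)

theorem norm_sqrt_three_mul_sq (z : ℂ) : ‖(√3 : ℂ) * z‖ ^ 2 = 3 * normSq z := by
  rw [norm_mul, mul_pow, normSq_eq_norm_sq, ← norm_pow, sqrt_three_sq, norm_ofNat]

theorem apply_add_intCast_iff {p : ℂ → Prop} (translate : ∀ z ∈ UHP, p (z + 1) ↔ p z) {z : ℂ}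
    (hz : z ∈ UHP) (n : ℤ) : p (z + n) ↔ p z := by
  induction n with
  | zero => simp
  | succ n ih =>
    rw [← ih, ← translate _ (add_intCast_mem_UHP hz n)]
    push_cast
    rw [add_assoc]
  | pred n ih =>
    rw [← ih, ← translate _ (add_intCast_mem_UHP hz _)]
    push_cast
    ring_nf

theorem mul_im_le_im_fricke {z : ℂ} (hz : z ∈ UHP) (hre : |z.re| ≤ 1 / 2) (him : z.im < 1 / 4) :
    16 / 15 * z.im ≤ (fricke z).im := by
  have hz0 : 0 < z.im := hz
  have hnormSq : 3 * normSq z ≤ 15 / 16 := by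
    have := abs_le.1 hre
    rw [normSq_apply]
    nlinarith
  rw [im_fricke, le_div_iff₀ (by linarith [normSq_pos_of_mem_UHP hz])]
  nlinarith

/-- Descent to the strip `1/4 ≤ im z`: translating to `|re z| ≤ 1/2` and applying the involution
multiplies `im z` by at least `16/15` as long as `im z < 1/4`. -/
theorem UHP_induction {p : ℂ → Prop} (translate : ∀ z ∈ UHP, p (z + 1) ↔ p z)
    (invert : ∀ z ∈ UHP, p (fricke z) → p z) (base : ∀ z ∈ UHP, 1 / 4 ≤ z.im → p z)
    {z : ℂ} (hz : z ∈ UHP) : p z := by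
  have descent (n : ℕ) : ∀ z ∈ UHP, 1 / 4 ≤ (16 / 15) ^ n * z.im → p z := by
    induction n with
    | zero => simpa using base
    | succ n ih =>
      intro z hz hn
      rcases le_or_gt (1 / 4) z.im with him | him
      · exact base z hz him
      rw [← apply_add_intCast_iff translate hz (-round z.re)]
      set w : ℂ := z + ((-round z.re : ℤ) : ℂ) with hw
      have hwU : w ∈ UHP := add_intCast_mem_UHP hz _
      have hwim : w.im = z.im := by simp [hw]
      have hwre : |w.re| ≤ 1 / 2 := by simpa [hw, sub_eq_add_neg] using abs_sub_round z.re
      refine invert w hwU (ih _ (fricke_mem_UHP hwU) (hn.trans ?_))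
      rw [pow_succ, mul_assoc, ← hwim]
      gcongr
      exact mul_im_le_im_fricke hwU hwre (hwim ▸ him)
  have hz0 : 0 < z.im := hz
  obtain ⟨n, hn⟩ := pow_unbounded_of_one_lt (1 / 4 / z.im) (show (1 : ℝ) < 16 / 15 by norm_num)
  exact descent n z hz ((div_le_iff₀ hz0).1 hn.le)

/-! ### The variable `q` -/

theorem qexp_eq_qParam (z : ℂ) : qexp z = Function.Periodic.qParam 1 z := by
  simp [qexp, Function.Periodic.qParam]

theorem norm_qexp (z : ℂ) : ‖qexp z‖ = Real.exp (-2 * Real.pi * z.im) := by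
  simp [qexp_eq_qParam, Function.Periodic.norm_qParam]

theorem qexp_ne_zero (z : ℂ) : qexp z ≠ 0 := exp_ne_zero _

theorem qexp_mem_ball {z : ℂ} (hz : z ∈ UHP) : qexp z ∈ ball (0 : ℂ) 1 := by
  rw [mem_ball_zero_iff, qexp_eq_qParam]
  exact Function.Periodic.norm_qParam_lt_one one_pos hz

theorem hasDerivAt_qexp (z : ℂ) : HasDerivAt qexp (2 * Real.pi * I * qexp z) z := by
  have h : HasDerivAt (fun z : ℂ => 2 * Real.pi * I * z) (2 * Real.pi * I) z := by
    simpa using (hasDerivAt_id z).const_mul (2 * Real.pi * I : ℂ)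
  exact h.cexp.congr_deriv (mul_comm _ _)

theorem qexp_add_one (z : ℂ) : qexp (z + 1) = qexp z := by
  rw [qexp, qexp, mul_add, exp_add, mul_one, exp_two_pi_mul_I, mul_one]

theorem qexp_three_mul (z : ℂ) : qexp (3 * z) = qexp z ^ 3 := by
  rw [qexp, qexp, ← exp_nat_mul]
  push_cast
  ring_nf

theorem exists_qexp_eq {q : ℂ} (hq0 : q ≠ 0) (hq : ‖q‖ < 1) :
    ∃ z ∈ UHP, qexp z = q ∧ z.im = -Real.log ‖q‖ / (2 * Real.pi) := by
  have him := Function.Periodic.im_invQParam 1 q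
  refine ⟨Function.Periodic.invQParam 1 q, ?_, ?_, ?_⟩
  · have := Real.log_neg (norm_pos_iff.2 hq0) hq
    change 0 < (Function.Periodic.invQParam 1 q).im
    rw [him, neg_div, neg_mul, neg_pos]
    exact mul_neg_of_pos_of_neg (by positivity) this
  · rw [qexp_eq_qParam, Function.Periodic.qParam_right_inv one_ne_zero hq0]
  · rw [him]
    ring

theorem pow_mem_ball_zero_one {q : ℂ} (hq : q ∈ ball (0 : ℂ) 1) {n : ℕ} (hn : n ≠ 0) :
    q ^ n ∈ ball (0 : ℂ) 1 := by
  rw [mem_ball_zero_iff] at *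
  rw [norm_pow]
  exact pow_lt_one₀ (norm_nonneg _) hq hn

/-- `f` is a holomorphic function of `q` on the upper half-plane, including at the cusp `q = 0`:
`f z = G (qexp z)` with `G` holomorphic on the unit disc. -/
structure HasQExpansion (f G : ℂ → ℂ) : Prop where
  differentiableOn : DifferentiableOn ℂ G (ball 0 1)
  eq_comp : ∀ z ∈ UHP, f z = G (qexp z)

section QExpansion

variable {f g F G : ℂ → ℂ}

theorem HasQExpansion.differentiableAt (hf : HasQExpansion f F) {q : ℂ}
    (hq : q ∈ ball (0 : ℂ) 1) : DifferentiableAt ℂ F q :=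
  hf.differentiableOn.differentiableAt (isOpen_ball.mem_nhds hq)

theorem HasQExpansion.apply_add_one (hf : HasQExpansion f F) {z : ℂ} (hz : z ∈ UHP) :
    f (z + 1) = f z := by
  rw [hf.eq_comp z hz, hf.eq_comp _ (add_one_mem_UHP hz), qexp_add_one]

theorem HasQExpansion.congr (hf : HasQExpansion f F) (h : ∀ z ∈ UHP, g z = f z) :
    HasQExpansion g F :=
  ⟨hf.differentiableOn, fun z hz => by rw [h z hz, hf.eq_comp z hz]⟩

theorem HasQExpansion.add (hf : HasQExpansion f F) (hg : HasQExpansion g G) :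
    HasQExpansion (fun z => f z + g z) (fun q => F q + G q) :=
  ⟨hf.differentiableOn.add hg.differentiableOn, fun z hz => by
    rw [hf.eq_comp z hz, hg.eq_comp z hz]⟩

theorem HasQExpansion.sub (hf : HasQExpansion f F) (hg : HasQExpansion g G) :
    HasQExpansion (fun z => f z - g z) (fun q => F q - G q) :=
  ⟨hf.differentiableOn.sub hg.differentiableOn, fun z hz => by
    rw [hf.eq_comp z hz, hg.eq_comp z hz]⟩

theorem HasQExpansion.mul (hf : HasQExpansion f F) (hg : HasQExpansion g G) :
    HasQExpansion (fun z => f z * g z) (fun q => F q * G q) :=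
  ⟨hf.differentiableOn.mul hg.differentiableOn, fun z hz => by
    rw [hf.eq_comp z hz, hg.eq_comp z hz]⟩

theorem HasQExpansion.const_mul (hf : HasQExpansion f F) (c : ℂ) :
    HasQExpansion (fun z => c * f z) (fun q => c * F q) :=
  ⟨hf.differentiableOn.const_mul c, fun z hz => by rw [hf.eq_comp z hz]⟩

theorem HasQExpansion.pow (hf : HasQExpansion f F) (n : ℕ) :
    HasQExpansion (fun z => f z ^ n) (fun q => F q ^ n) :=
  ⟨hf.differentiableOn.pow n, fun z hz => by rw [hf.eq_comp z hz]⟩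

theorem HasQExpansion.comp_three_mul (hf : HasQExpansion f F) :
    HasQExpansion (fun z => f (3 * z)) (fun q => F (q ^ 3)) :=
  ⟨hf.differentiableOn.comp (by fun_prop) fun _ hq => pow_mem_ball_zero_one hq three_ne_zero,
    fun z hz => by rw [hf.eq_comp _ (three_mul_mem_UHP hz), qexp_three_mul]⟩

end QExpansion

/-! ### Vanishing in negative weight -/

theorem eq_zero_of_norm_le_of_tendsto {G : ℂ → ℂ} (hG : DifferentiableOn ℂ G (ball 0 1))
    {b : ℝ → ℝ} (hb : Tendsto b (𝓝[<] 1) (𝓝 0))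
    (hle : ∀ q ∈ ball (0 : ℂ) 1, q ≠ 0 → ‖G q‖ ≤ b ‖q‖) {q : ℂ} (hq : q ∈ ball (0 : ℂ) 1) :
    G q = 0 := by
  rw [mem_ball_zero_iff] at hq
  have hmax : ∀ᶠ r in 𝓝[<] (1 : ℝ), ‖G q‖ ≤ b r := by
    filter_upwards [Ioo_mem_nhdsLT hq] with r ⟨hqr, hr1⟩
    have hr0 : 0 < r := (norm_nonneg q).trans_lt hqr
    refine norm_le_of_forall_mem_frontier_norm_le (U := ball (0 : ℂ) r) isBounded_ball
      (DifferentiableOn.diffContOnCl ?_) (fun s hs => ?_) (subset_closure (by simpa using hqr))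
    · rw [closure_ball _ hr0.ne']
      exact hG.mono (closedBall_subset_ball hr1)
    · rw [frontier_ball _ hr0.ne', mem_sphere_zero_iff_norm] at hs
      rw [← hs]
      exact hle s (by simpa [hs] using hr1) (norm_pos_iff.1 (hs ▸ hr0))
  exact norm_le_zero_iff.1 (ge_of_tendsto hb hmax)

section NegativeWeight

variable {h G : ℂ → ℂ} {p : ℕ}

theorem norm_sq_div_im_pow_fricke {z : ℂ} (hz : z ∈ UHP)
    (hweight : ‖(√3 : ℂ) * z‖ ^ p * ‖h (fricke z)‖ = ‖h z‖) :
    ‖h (fricke z)‖ ^ 2 / (fricke z).im ^ p = ‖h z‖ ^ 2 / z.im ^ p := by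
  have := normSq_pos_of_mem_UHP hz
  have : 0 < z.im := hz
  rw [im_fricke, ← hweight, mul_pow, ← pow_mul, mul_comm p 2, pow_mul, norm_sqrt_three_mul_sq,
    div_pow]
  field_simp

theorem HasQExpansion.exists_norm_le (hG : HasQExpansion h G) {y : ℝ} (hy : 0 < y) :
    ∃ C, ∀ z ∈ UHP, y ≤ z.im → ‖h z‖ ≤ C := by
  have hr : Real.exp (-2 * Real.pi * y) < 1 := by
    rw [Real.exp_lt_one_iff]
    nlinarith [mul_pos Real.pi_pos hy]
  obtain ⟨C, hC⟩ := (isCompact_closedBall (0 : ℂ) _).exists_bound_of_continuousOn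
    (hG.differentiableOn.continuousOn.mono (closedBall_subset_ball hr))
  refine ⟨C, fun z hz hyz => ?_⟩
  rw [hG.eq_comp z hz]
  refine hC _ ?_
  rw [mem_closedBall_zero_iff, norm_qexp, Real.exp_le_exp]
  nlinarith [Real.pi_pos]

theorem HasQExpansion.exists_norm_sq_le_mul_im_pow (hG : HasQExpansion h G)
    (hweight : ∀ z ∈ UHP, ‖(√3 : ℂ) * z‖ ^ p * ‖h (fricke z)‖ = ‖h z‖) :
    ∃ C, ∀ z ∈ UHP, ‖h z‖ ^ 2 ≤ C * z.im ^ p := by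
  obtain ⟨C, hC⟩ := hG.exists_norm_le (show (0 : ℝ) < 1 / 4 by norm_num)
  refine ⟨C ^ 2 * 4 ^ p, fun z hz => ?_⟩
  suffices hquot : ‖h z‖ ^ 2 / z.im ^ p ≤ C ^ 2 * 4 ^ p from
    (div_le_iff₀ (pow_pos (show 0 < z.im from hz) p)).1 hquot
  refine UHP_induction (p := fun z => ‖h z‖ ^ 2 / z.im ^ p ≤ C ^ 2 * 4 ^ p)
    (fun z hz => ?_) (fun z hz => ?_) (fun z hz him => ?_) hz
  · rw [hG.apply_add_one hz, add_im, one_im, add_zero]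
  · rw [norm_sq_div_im_pow_fricke hz (hweight z hz)]
    exact id
  · have hle : ‖h z‖ ^ 2 ≤ C ^ 2 := by gcongr; exact hC z hz him
    have hone : (1 : ℝ) ≤ (4 * z.im) ^ p := one_le_pow₀ (by linarith)
    rw [div_le_iff₀ (pow_pos hz p), mul_assoc, ← mul_pow]
    nlinarith [sq_nonneg C]

/-- The function `‖h‖² / (im z)ᵖ` is invariant and bounded on the strip `1/4 ≤ im z`, hence
everywhere; so `h` tends to zero as `‖q‖ → 1`. -/
theorem HasQExpansion.eq_zero_of_negative_weight (hG : HasQExpansion h G) (hp : p ≠ 0)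
    (hweight : ∀ z ∈ UHP, ‖(√3 : ℂ) * z‖ ^ p * ‖h (fricke z)‖ = ‖h z‖) {z : ℂ} (hz : z ∈ UHP) :
    h z = 0 := by
  obtain ⟨C, hC⟩ := hG.exists_norm_sq_le_mul_im_pow hweight
  have hb : Tendsto (fun r : ℝ => C * (-Real.log r / (2 * Real.pi)) ^ p) (𝓝[<] 1) (𝓝 0) := by
    have hcont : ContinuousAt (fun r : ℝ => C * (-Real.log r / (2 * Real.pi)) ^ p) 1 := by
      fun_prop (disch := norm_num)
    simpa [hp] using hcont.tendsto.mono_left nhdsWithin_le_nhds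
  have hsq : G (qexp z) ^ 2 = 0 := by
    refine eq_zero_of_norm_le_of_tendsto (hG.differentiableOn.pow 2) hb (fun q hq hq0 => ?_)
      (qexp_mem_ball hz)
    obtain ⟨w, hw, rfl, him⟩ := exists_qexp_eq hq0 (mem_ball_zero_iff.1 hq)
    rw [Pi.pow_apply, norm_pow, ← hG.eq_comp w hw, ← him]
    exact hC w hw
  rw [hG.eq_comp z hz]
  exact pow_eq_zero_iff two_ne_zero |>.1 hsq

end NegativeWeight

/-! ### The derivation `θ = q d/dq` -/

/-- The derivation `θ = (2πi)⁻¹ d/dz = q d/dq`. -/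
def theta (f : ℂ → ℂ) (z : ℂ) : ℂ := deriv f z / (2 * Real.pi * I)

/-- `f` is differentiable at `z` with `θ f z = d`. -/
def HasThetaDerivAt (f : ℂ → ℂ) (d z : ℂ) : Prop := HasDerivAt f (2 * Real.pi * I * d) z

section Theta

variable {f g F G : ℂ → ℂ} {a b z : ℂ}

theorem HasThetaDerivAt.theta_eq (hf : HasThetaDerivAt f a z) : theta f z = a := by
  rw [theta, HasDerivAt.deriv hf, mul_div_cancel_left₀ _ two_pi_I_ne_zero]

theorem HasThetaDerivAt.congr_theta (hf : HasThetaDerivAt f a z) (h : a = b) :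
    HasThetaDerivAt f b z := h ▸ hf

theorem HasThetaDerivAt.congr_of_eqOn (hf : HasThetaDerivAt f a z) (hz : z ∈ UHP)
    (h : ∀ w ∈ UHP, g w = f w) : HasThetaDerivAt g a z :=
  HasDerivAt.congr_of_eventuallyEq hf (eventually_of_mem (isOpen_UHP.mem_nhds hz) h)

theorem HasThetaDerivAt.add (hf : HasThetaDerivAt f a z) (hg : HasThetaDerivAt g b z) :
    HasThetaDerivAt (fun z => f z + g z) (a + b) z :=
  (HasDerivAt.add hf hg).congr_deriv (by ring)

theorem HasThetaDerivAt.sub (hf : HasThetaDerivAt f a z) (hg : HasThetaDerivAt g b z) :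
    HasThetaDerivAt (fun z => f z - g z) (a - b) z :=
  (HasDerivAt.sub hf hg).congr_deriv (by ring)

theorem HasThetaDerivAt.mul (hf : HasThetaDerivAt f a z) (hg : HasThetaDerivAt g b z) :
    HasThetaDerivAt (fun z => f z * g z) (a * g z + f z * b) z :=
  (HasDerivAt.mul hf hg).congr_deriv (by ring)

theorem HasThetaDerivAt.const_mul (c : ℂ) (hf : HasThetaDerivAt f a z) :
    HasThetaDerivAt (fun z => c * f z) (c * a) z :=
  (HasDerivAt.const_mul c hf).congr_deriv (by ring)

theorem HasThetaDerivAt.pow (hf : HasThetaDerivAt f a z) (n : ℕ) :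
    HasThetaDerivAt (fun z => f z ^ n) (n * f z ^ (n - 1) * a) z :=
  (HasDerivAt.pow hf n).congr_deriv (by ring)

theorem HasThetaDerivAt.div (hf : HasThetaDerivAt f a z) (hg : HasThetaDerivAt g b z)
    (hgz : g z ≠ 0) : HasThetaDerivAt (fun z => f z / g z) ((a * g z - f z * b) / g z ^ 2) z :=
  (HasDerivAt.div hf hg hgz).congr_deriv (by ring)

theorem HasQExpansion.hasThetaDerivAt_comp (hf : HasQExpansion f F) (hz : z ∈ UHP) :
    HasThetaDerivAt f (qexp z * deriv F (qexp z)) z := by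
  have hcomp := (hf.differentiableAt (qexp_mem_ball hz)).hasDerivAt.comp z (hasDerivAt_qexp z)
  exact (hcomp.congr_of_eventuallyEq (eventually_of_mem (isOpen_UHP.mem_nhds hz) hf.eq_comp))
    |>.congr_deriv (by ring)

theorem HasQExpansion.hasThetaDerivAt (hf : HasQExpansion f F) (hz : z ∈ UHP) :
    HasThetaDerivAt f (theta f z) z :=
  (hf.hasThetaDerivAt_comp hz).congr_theta (hf.hasThetaDerivAt_comp hz).theta_eq.symm

theorem HasQExpansion.theta (hf : HasQExpansion f F) :
    HasQExpansion (theta f) (fun q => q * deriv F q) :=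
  ⟨differentiableOn_id.mul (hf.differentiableOn.deriv isOpen_ball),
    fun _ hz => (hf.hasThetaDerivAt_comp hz).theta_eq⟩

theorem HasQExpansion.differentiableOn_UHP (hf : HasQExpansion f F) : DifferentiableOn ℂ f UHP :=
  fun _ hz => (hf.hasThetaDerivAt hz).differentiableAt.differentiableWithinAt

end Theta

/-! ### The first two `q`-coefficients -/

/-- `f = a + b q + O(q²)` at the cusp, with `f` holomorphic in `q` on the unit disc. -/
def HasQCoeffs (f : ℂ → ℂ) (a b : ℂ) : Prop :=
  ∃ F, HasQExpansion f F ∧ F 0 = a ∧ HasDerivAt F b 0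

section QCoeffs

variable {f g : ℂ → ℂ} {a b a' b' : ℂ}

theorem HasQCoeffs.cast (hf : HasQCoeffs f a b) (ha : a = a') (hb : b = b') :
    HasQCoeffs f a' b' := ha ▸ hb ▸ hf

theorem HasQCoeffs.congr (hf : HasQCoeffs f a b) (h : ∀ z ∈ UHP, g z = f z) :
    HasQCoeffs g a b := by
  obtain ⟨F, hF, hF0⟩ := hf
  exact ⟨F, hF.congr h, hF0⟩

theorem HasQCoeffs.add (hf : HasQCoeffs f a b) (hg : HasQCoeffs g a' b') :
    HasQCoeffs (fun z => f z + g z) (a + a') (b + b') := by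
  obtain ⟨F, hF, rfl, hF1⟩ := hf
  obtain ⟨G, hG, rfl, hG1⟩ := hg
  exact ⟨_, hF.add hG, rfl, hF1.add hG1⟩

theorem HasQCoeffs.sub (hf : HasQCoeffs f a b) (hg : HasQCoeffs g a' b') :
    HasQCoeffs (fun z => f z - g z) (a - a') (b - b') := by
  obtain ⟨F, hF, rfl, hF1⟩ := hf
  obtain ⟨G, hG, rfl, hG1⟩ := hg
  exact ⟨_, hF.sub hG, rfl, hF1.sub hG1⟩

theorem HasQCoeffs.mul (hf : HasQCoeffs f a b) (hg : HasQCoeffs g a' b') :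
    HasQCoeffs (fun z => f z * g z) (a * a') (b * a' + a * b') := by
  obtain ⟨F, hF, rfl, hF1⟩ := hf
  obtain ⟨G, hG, rfl, hG1⟩ := hg
  exact ⟨_, hF.mul hG, rfl, hF1.mul hG1⟩

theorem HasQCoeffs.const_mul (hf : HasQCoeffs f a b) (c : ℂ) :
    HasQCoeffs (fun z => c * f z) (c * a) (c * b) := by
  obtain ⟨F, hF, rfl, hF1⟩ := hf
  exact ⟨_, hF.const_mul c, rfl, hF1.const_mul c⟩

theorem HasQCoeffs.pow (hf : HasQCoeffs f a b) (n : ℕ) :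
    HasQCoeffs (fun z => f z ^ n) (a ^ n) (n * a ^ (n - 1) * b) := by
  obtain ⟨F, hF, rfl, hF1⟩ := hf
  exact ⟨_, hF.pow n, rfl, hF1.pow n⟩

theorem HasQCoeffs.comp_three_mul (hf : HasQCoeffs f a b) :
    HasQCoeffs (fun z => f (3 * z)) a 0 := by
  obtain ⟨F, hF, rfl, hF1⟩ := hf
  refine ⟨_, hF.comp_three_mul, by simp, ?_⟩
  have hF1' : HasDerivAt F b ((0 : ℂ) ^ 3) := by simpa using hF1
  exact (hF1'.comp 0 (hasDerivAt_pow 3 (0 : ℂ))).congr_deriv (by simp)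

theorem hasDerivAt_id_mul_zero {G : ℂ → ℂ} (hG : DifferentiableAt ℂ G 0) :
    HasDerivAt (fun q => q * G q) (G 0) 0 :=
  ((hasDerivAt_id (0 : ℂ)).mul hG.hasDerivAt).congr_deriv (by simp)

theorem HasQCoeffs.theta (hf : HasQCoeffs f a b) : HasQCoeffs (theta f) 0 b := by
  obtain ⟨F, hF, rfl, hF1⟩ := hf
  refine ⟨_, hF.theta, by simp, ?_⟩
  have hF' := (hF.differentiableOn.deriv isOpen_ball).differentiableAt
    (isOpen_ball.mem_nhds (mem_ball_self one_pos))
  simpa only [hF1.deriv] using hasDerivAt_id_mul_zero hF'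

theorem exists_eq_id_mul_of_apply_zero {F : ℂ → ℂ} (hF : DifferentiableOn ℂ F (ball 0 1))
    (hF0 : F 0 = 0) : ∃ G, DifferentiableOn ℂ G (ball 0 1) ∧ ∀ q, F q = q * G q := by
  refine ⟨dslope F 0, (differentiableOn_dslope (ball_mem_nhds _ one_pos)).2 hF, fun q => ?_⟩
  simpa [hF0] using (sub_smul_dslope F 0 q).symm

theorem HasQCoeffs.exists_eq_qexp_sq_mul (hf : HasQCoeffs f 0 0) :
    ∃ G, DifferentiableOn ℂ G (ball 0 1) ∧ ∀ z ∈ UHP, f z = qexp z ^ 2 * G (qexp z) := by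
  obtain ⟨F, hF, hF0, hF1⟩ := hf
  obtain ⟨A, hA, hFA⟩ := exists_eq_id_mul_of_apply_zero hF.differentiableOn hF0
  have hA0 : A 0 = 0 :=
    (hasDerivAt_id_mul_zero (hA.differentiableAt (ball_mem_nhds _ one_pos))).unique
      (funext hFA ▸ hF1)
  obtain ⟨B, hB, hAB⟩ := exists_eq_id_mul_of_apply_zero hA hA0
  exact ⟨B, hB, fun z hz => by rw [hF.eq_comp z hz, hFA, hAB]; ring⟩

end QCoeffs

/-! ### Eisenstein series -/

/-- The series `∑ σⱼ(n+1) qⁿ`, so that `q * divisorSeries j q` is the nonconstant part of an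
Eisenstein series of weight `j + 1` up to normalization. -/
def divisorSeries (j : ℕ) (q : ℂ) : ℂ :=
  ∑' n : ℕ, (ArithmeticFunction.sigma j (n + 1) : ℂ) * q ^ n

theorem divisorSeries_zero (j : ℕ) : divisorSeries j 0 = 1 := by
  rw [divisorSeries, tsum_eq_single 0]
  · simp
  · intro n hn
    simp [hn]

theorem summable_sigma_mul_pow (j : ℕ) {r : ℝ} (hr0 : 0 < r) (hr1 : r < 1) :
    Summable fun n : ℕ => (ArithmeticFunction.sigma j (n + 1) : ℝ) * r ^ n := by
  have hpow : Summable fun n : ℕ => ((n + 1 : ℕ) : ℝ) ^ (j + 1) * r ^ (n + 1) * r⁻¹ :=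
    ((summable_nat_add_iff (f := fun n : ℕ => (n : ℝ) ^ (j + 1) * r ^ n) 1).2
      (summable_pow_mul_geometric_of_norm_lt_one (j + 1)
        (by rwa [Real.norm_of_nonneg hr0.le]))).mul_right _
  refine hpow.of_nonneg_of_le (fun n => by positivity) fun n => ?_
  rw [pow_succ r n, mul_assoc, mul_inv_cancel_right₀ hr0.ne']
  gcongr
  exact_mod_cast ArithmeticFunction.sigma_le_pow_succ j (n + 1)

theorem differentiableOn_divisorSeries (j : ℕ) :
    DifferentiableOn ℂ (divisorSeries j) (ball 0 1) := by
  intro q hq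
  obtain ⟨r, hqr, hr1⟩ := exists_between (mem_ball_zero_iff.1 hq)
  have hr0 : 0 < r := (norm_nonneg q).trans_lt hqr
  have hdiff := differentiableOn_tsum_of_summable_norm (U := ball (0 : ℂ) r)
    (F := fun n q => (ArithmeticFunction.sigma j (n + 1) : ℂ) * q ^ n)
    (summable_sigma_mul_pow j hr0 hr1) (fun n => by fun_prop) isOpen_ball fun n w hw => by
      rw [norm_mul, norm_pow, norm_natCast]
      gcongr
      exact (mem_ball_zero_iff.1 hw).le
  exact (hdiff.differentiableAt (isOpen_ball.mem_nhds (by simpa using hqr))).differentiableWithinAt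

theorem hasQCoeffs_one_add_tsum_sigma (j : ℕ) (c : ℂ) :
    HasQCoeffs (fun z => 1 + c * ∑' n : ℕ, (ArithmeticFunction.sigma j (n + 1) : ℂ) *
      qexp z ^ (n + 1)) 1 c := by
  have hd := differentiableOn_divisorSeries j
  refine ⟨fun q => 1 + c * (q * divisorSeries j q), ⟨?_, fun z _ => ?_⟩, by simp, ?_⟩
  · exact (differentiableOn_const 1).add ((differentiableOn_id.mul hd).const_mul c)
  · rw [divisorSeries, ← tsum_mul_left (a := qexp z)]
    congr! 4
    ring
  · refine (((hasDerivAt_id_mul_zero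
      (hd.differentiableAt (ball_mem_nhds _ one_pos))).const_mul c).const_add 1).congr_deriv ?_
    rw [divisorSeries_zero, mul_one]

theorem hasQCoeffs_E2 : HasQCoeffs E2 1 (-24) :=
  (hasQCoeffs_one_add_tsum_sigma 1 (-24)).congr fun z _ => by rw [E2]; ring

theorem hasQCoeffs_E4 : HasQCoeffs E4 1 240 := hasQCoeffs_one_add_tsum_sigma 3 240

theorem hasQCoeffs_M2star3 : HasQCoeffs M2star3 1 (-6) :=
  ((((hasQCoeffs_E2.comp_three_mul.const_mul 3).add hasQCoeffs_E2).const_mul (1 / 4)).congr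
    (fun z _ => by rw [M2star3]; ring)).cast (by norm_num) (by norm_num)

theorem hasQCoeffs_M2minus3 : HasQCoeffs M2minus3 1 12 :=
  ((((hasQCoeffs_E2.comp_three_mul.const_mul 3).sub hasQCoeffs_E2).const_mul (1 / 2)).congr
    (fun z _ => by rw [M2minus3]; ring)).cast (by norm_num) (by norm_num)

theorem hasQCoeffs_M4plus3 : HasQCoeffs M4plus3 1 24 :=
  ((((hasQCoeffs_E4.comp_three_mul.const_mul 9).add hasQCoeffs_E4).const_mul (1 / 10)).congr
    (fun z _ => by rw [M4plus3]; ring)).cast (by norm_num) (by norm_num)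

theorem E2_coe (τ : UpperHalfPlane) : E2 τ = EisensteinSeries.E2 τ := by
  rw [EisensteinSeries.E2_eq_tsum_cexp, E2, tsum_pnat_eq_tsum_succ
    (f := fun n : ℕ => (ArithmeticFunction.sigma 1 n : ℂ) * cexp (2 * Real.pi * I * τ) ^ n)]
  rfl

theorem E4_coe (τ : UpperHalfPlane) : E4 τ = ModularForm.E₄ τ := by
  have hbernoulli : bernoulli 4 = -1 / 30 := by
    rw [bernoulli_eq_bernoulli'_of_ne_one (by norm_num), bernoulli'_four]
  have htsum := tsum_pnat_eq_tsum_succ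
    (f := fun n : ℕ => (ArithmeticFunction.sigma 3 n : ℂ) * cexp (2 * Real.pi * I * τ) ^ n)
  rw [EisensteinSeries.q_expansion_bernoulli _ (by decide)]
  simp only [zpow_natCast]
  rw [show 4 - 1 = 3 from rfl, htsum, hbernoulli, E4]
  simp only [qexp]
  push_cast
  ring

theorem coe_mk_neg_inv (τ : UpperHalfPlane) :
    (UpperHalfPlane.mk (-τ : ℂ)⁻¹ τ.im_inv_neg_coe_pos : ℂ) = -1 / τ := by
  rw [UpperHalfPlane.coe_mk, inv_neg, neg_div, one_div]

theorem E2_neg_one_div {z : ℂ} (hz : z ∈ UHP) :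
    E2 (-1 / z) = z ^ 2 * E2 z + 6 * z / (Real.pi * I) := by
  have hz0 := ne_zero_of_mem_UHP hz
  have hpi : (Real.pi : ℂ) ≠ 0 := ofReal_ne_zero.2 Real.pi_ne_zero
  have hslash := congrFun (EisensteinSeries.E2_slash_action ModularGroup.S) ⟨z, hz⟩
  rw [SlashInvariantForm.slash_S_apply, ← E2_coe, coe_mk_neg_inv, Pi.sub_apply, ← E2_coe,
    Pi.smul_apply, EisensteinSeries.D2_S, riemannZeta_two] at hslash
  simp only [smul_eq_mul] at hslash
  field_simp at hslash ⊢
  linear_combination I * hslash - 6 * z * I_sq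

theorem E4_neg_one_div {z : ℂ} (hz : z ∈ UHP) : E4 (-1 / z) = z ^ 4 * E4 z := by
  have hz0 := ne_zero_of_mem_UHP hz
  have hslash := congrFun (SlashInvariantForm.slash_action_eqn ModularForm.E₄
    (ModularGroup.S : GL (Fin 2) ℝ) ⟨ModularGroup.S, rfl⟩) ⟨z, hz⟩
  erw [SlashInvariantForm.slash_S_apply, ← E4_coe, coe_mk_neg_inv, ← E4_coe] at hslash
  simp only at hslash
  field_simp at hslash
  rw [neg_div, hslash]

/-! ### Eta products -/

/-- The Euler product `∏ (1 - qⁿ)` over `n ≥ 1`. -/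
def eulerProduct (q : ℂ) : ℂ := ∏' n : ℕ, (1 - q ^ (n + 1))

/-- The eta product `η(z)ʲ η(3z)ʲ`, which is `M₆` for `j = 6` and `P` for `j = 3k`. -/
def etaProduct (j : ℕ) (z : ℂ) : ℂ := ModularForm.eta z ^ j * ModularForm.eta (3 * z) ^ j

/-- The power series `∏ (1 - qⁿ)⁶ (1 - q³ⁿ)⁶`, i.e. `M₆ / q`. -/
def M6unit (q : ℂ) : ℂ := eulerProduct q ^ 6 * eulerProduct (q ^ 3) ^ 6

theorem differentiableOn_eulerProduct : DifferentiableOn ℂ eulerProduct (ball 0 1) :=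
  ModularForm.differentiableOn_tprod_one_sub_pow

theorem eulerProduct_zero : eulerProduct 0 = 1 := by simp [eulerProduct]

theorem eulerProduct_ne_zero {q : ℂ} (hq : q ∈ ball (0 : ℂ) 1) : eulerProduct q ≠ 0 := by
  rcases eq_or_ne q 0 with rfl | hq0
  · rw [eulerProduct_zero]
    exact one_ne_zero
  · obtain ⟨z, hz, rfl, -⟩ := exists_qexp_eq hq0 (mem_ball_zero_iff.1 hq)
    have hne := ModularForm.eta_tprod_ne_zero (z := z) hz
    simp only [ModularForm.eta_q_eq_pow] at hne
    exact hne

theorem eta_eq_exp_mul_eulerProduct (z : ℂ) :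
    ModularForm.eta z = cexp (2 * Real.pi * I * z / 24) * eulerProduct (qexp z) := by
  rw [ModularForm.eta]
  simp only [ModularForm.eta_q_eq_pow]
  simp [Function.Periodic.qParam, eulerProduct, qexp]

theorem tprod_eq_eulerProduct_pow (j : ℕ) {z : ℂ} (hz : z ∈ UHP) :
    ∏' n : ℕ, ((1 - qexp z ^ (n + 1)) ^ j * (1 - qexp z ^ (3 * (n + 1))) ^ j)
      = eulerProduct (qexp z) ^ j * eulerProduct (qexp z ^ 3) ^ j := by
  have hq := qexp_mem_ball hz
  have h1 := ModularForm.multipliable_one_sub_pow (mem_ball_zero_iff.1 hq)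
  have h3 := ModularForm.multipliable_one_sub_pow
    (mem_ball_zero_iff.1 (pow_mem_ball_zero_one hq three_ne_zero))
  simp only [pow_mul (qexp z) 3]
  rw [(h1.pow j).tprod_mul (h3.pow j), h1.tprod_pow, h3.tprod_pow, eulerProduct, eulerProduct]

theorem etaProduct_eq_exp_mul_tprod (j : ℕ) {z : ℂ} (hz : z ∈ UHP) :
    etaProduct j z = cexp (Real.pi * I * j * z / 3) *
      ∏' n : ℕ, ((1 - qexp z ^ (n + 1)) ^ j * (1 - qexp z ^ (3 * (n + 1))) ^ j) := by
  have hexp : (Real.pi * I * j * z / 3 : ℂ) =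
      j * (2 * Real.pi * I * z / 24) + j * (2 * Real.pi * I * (3 * z) / 24) := by ring
  rw [tprod_eq_eulerProduct_pow j hz, etaProduct, eta_eq_exp_mul_eulerProduct,
    eta_eq_exp_mul_eulerProduct, mul_pow, mul_pow, qexp_three_mul, hexp, exp_add, exp_nat_mul,
    exp_nat_mul]
  ring

theorem M6fun_eq_etaProduct {z : ℂ} (hz : z ∈ UHP) : M6fun z = etaProduct 6 z := by
  rw [M6fun, etaProduct_eq_exp_mul_tprod 6 hz, qexp]
  congr 2
  push_cast
  ring

theorem Pfun3_eq_etaProduct (k : ℕ) {z : ℂ} (hz : z ∈ UHP) : Pfun3 k z = etaProduct (3 * k) z := by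
  rw [Pfun3, etaProduct_eq_exp_mul_tprod _ hz]
  congr 2
  push_cast
  ring

theorem etaProduct_ne_zero (j : ℕ) {z : ℂ} (hz : z ∈ UHP) : etaProduct j z ≠ 0 :=
  mul_ne_zero (pow_ne_zero _ (ModularForm.eta_ne_zero hz))
    (pow_ne_zero _ (ModularForm.eta_ne_zero (three_mul_mem_UHP hz)))

theorem M6fun_ne_zero {z : ℂ} (hz : z ∈ UHP) : M6fun z ≠ 0 := by
  rw [M6fun_eq_etaProduct hz]
  exact etaProduct_ne_zero 6 hz

theorem Pfun3_ne_zero (k : ℕ) {z : ℂ} (hz : z ∈ UHP) : Pfun3 k z ≠ 0 := by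
  rw [Pfun3_eq_etaProduct k hz]
  exact etaProduct_ne_zero _ hz

theorem hasThetaDerivAt_eta {z : ℂ} (hz : z ∈ UHP) :
    HasThetaDerivAt ModularForm.eta (E2 z / 24 * ModularForm.eta z) z := by
  have hlog := ModularForm.logDeriv_eta_eq_E2 ⟨z, hz⟩
  rw [← E2_coe, logDeriv_apply, div_eq_iff (ModularForm.eta_ne_zero hz)] at hlog
  have hd := (ModularForm.differentiableAt_eta_of_mem_upperHalfPlaneSet (z := z) hz).hasDerivAt
  refine hd.congr_deriv (hlog.trans ?_)
  simp only
  ring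

theorem hasThetaDerivAt_etaProduct (j : ℕ) {z : ℂ} (hz : z ∈ UHP) :
    HasThetaDerivAt (etaProduct j) (j / 6 * M2star3 z * etaProduct j z) z := by
  have h1 := hasThetaDerivAt_eta hz
  have h3 : HasThetaDerivAt (fun z => ModularForm.eta (3 * z))
      (E2 (3 * z) / 8 * ModularForm.eta (3 * z)) z :=
    (HasDerivAt.comp z (hasThetaDerivAt_eta (three_mul_mem_UHP hz))
      ((hasDerivAt_id z).const_mul 3)).congr_deriv (by ring)
  refine ((h1.pow j).mul (h3.pow j)).congr_theta ?_
  rw [etaProduct, M2star3]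
  cases j with
  | zero => simp
  | succ n =>
    simp only [Nat.add_sub_cancel, pow_succ]
    push_cast
    ring

theorem hasThetaDerivAt_M6fun {z : ℂ} (hz : z ∈ UHP) :
    HasThetaDerivAt M6fun (M2star3 z * M6fun z) z := by
  refine ((hasThetaDerivAt_etaProduct 6 hz).congr_of_eqOn hz
    fun w hw => M6fun_eq_etaProduct hw).congr_theta ?_
  rw [M6fun_eq_etaProduct hz]
  norm_num

theorem hasThetaDerivAt_Pfun3 (k : ℕ) {z : ℂ} (hz : z ∈ UHP) :
    HasThetaDerivAt (Pfun3 k) (k / 2 * M2star3 z * Pfun3 k z) z := by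
  refine ((hasThetaDerivAt_etaProduct (3 * k) hz).congr_of_eqOn hz
    fun w hw => Pfun3_eq_etaProduct k hw).congr_theta ?_
  rw [Pfun3_eq_etaProduct k hz]
  push_cast
  ring

theorem differentiableOn_M6unit : DifferentiableOn ℂ M6unit (ball 0 1) :=
  (differentiableOn_eulerProduct.pow 6).mul ((differentiableOn_eulerProduct.comp (by fun_prop)
    fun _ hq => pow_mem_ball_zero_one hq three_ne_zero).pow 6)

theorem M6unit_ne_zero {q : ℂ} (hq : q ∈ ball (0 : ℂ) 1) : M6unit q ≠ 0 :=
  mul_ne_zero (pow_ne_zero _ (eulerProduct_ne_zero hq))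
    (pow_ne_zero _ (eulerProduct_ne_zero (pow_mem_ball_zero_one hq three_ne_zero)))

theorem M6unit_zero : M6unit 0 = 1 := by simp [M6unit, eulerProduct_zero]

theorem hasQExpansion_M6fun : HasQExpansion M6fun fun q => q * M6unit q :=
  ⟨differentiableOn_id.mul differentiableOn_M6unit, fun z hz => by
    rw [M6fun, tprod_eq_eulerProduct_pow 6 hz, M6unit]⟩

theorem hasQCoeffs_M6fun : HasQCoeffs M6fun 0 1 :=
  ⟨_, hasQExpansion_M6fun, by simp, M6unit_zero ▸ hasDerivAt_id_mul_zero
    (differentiableOn_M6unit.differentiableAt (ball_mem_nhds _ one_pos))⟩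

theorem eta_neg_one_div_sq {z : ℂ} (hz : z ∈ UHP) :
    ModularForm.eta (-1 / z) ^ 2 = -I * z * ModularForm.eta z ^ 2 := by
  have hsqrt (w : ℂ) : sqrt w ^ 2 = w := by simp [sqrt]
  have heta := ModularForm.eta_comp_eq_csqrt_I_inv hz
  simp only [Function.comp_apply, Pi.smul_apply, Pi.mul_apply, smul_eq_mul] at heta
  rw [heta, mul_pow, mul_pow, inv_pow, hsqrt, hsqrt, inv_I]
  ring

/-! ### Forms for the Fricke group -/

/-- A modular form of weight `w` for the group generated by `z ↦ z + 1` and the Fricke involution: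
holomorphic in `q`, with `f (-1/(3z)) = ε (√3 z)ʷ f z`. -/
structure IsFrickeForm (ε : ℂ) (w : ℕ) (f : ℂ → ℂ) : Prop where
  exists_qExpansion : ∃ F, HasQExpansion f F
  apply_fricke : ∀ z ∈ UHP, f (fricke z) = ε * (√3 * z) ^ w * f z

namespace IsFrickeForm

variable {ε ε' : ℂ} {w w' : ℕ} {f g : ℂ → ℂ} {z : ℂ}

theorem hasThetaDerivAt (hf : IsFrickeForm ε w f) (hz : z ∈ UHP) :
    HasThetaDerivAt f (theta f z) z :=
  let ⟨_, hF⟩ := hf.exists_qExpansion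
  hF.hasThetaDerivAt hz

theorem differentiableOn (hf : IsFrickeForm ε w f) : DifferentiableOn ℂ f UHP :=
  let ⟨_, hF⟩ := hf.exists_qExpansion
  hF.differentiableOn_UHP

theorem cast (hf : IsFrickeForm ε w f) (hε : ε = ε') (hw : w = w') : IsFrickeForm ε' w' f :=
  hε ▸ hw ▸ hf

theorem add (hf : IsFrickeForm ε w f) (hg : IsFrickeForm ε w g) :
    IsFrickeForm ε w (fun z => f z + g z) := by
  obtain ⟨F, hF⟩ := hf.exists_qExpansion
  obtain ⟨G, hG⟩ := hg.exists_qExpansion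
  refine ⟨⟨_, hF.add hG⟩, fun z hz => ?_⟩
  rw [hf.apply_fricke z hz, hg.apply_fricke z hz]
  ring

theorem sub (hf : IsFrickeForm ε w f) (hg : IsFrickeForm ε w g) :
    IsFrickeForm ε w (fun z => f z - g z) := by
  obtain ⟨F, hF⟩ := hf.exists_qExpansion
  obtain ⟨G, hG⟩ := hg.exists_qExpansion
  refine ⟨⟨_, hF.sub hG⟩, fun z hz => ?_⟩
  rw [hf.apply_fricke z hz, hg.apply_fricke z hz]
  ring

theorem mul (hf : IsFrickeForm ε w f) (hg : IsFrickeForm ε' w' g) :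
    IsFrickeForm (ε * ε') (w + w') (fun z => f z * g z) := by
  obtain ⟨F, hF⟩ := hf.exists_qExpansion
  obtain ⟨G, hG⟩ := hg.exists_qExpansion
  refine ⟨⟨_, hF.mul hG⟩, fun z hz => ?_⟩
  rw [hf.apply_fricke z hz, hg.apply_fricke z hz]
  ring

theorem const_mul (hf : IsFrickeForm ε w f) (c : ℂ) : IsFrickeForm ε w (fun z => c * f z) := by
  obtain ⟨F, hF⟩ := hf.exists_qExpansion
  refine ⟨⟨_, hF.const_mul c⟩, fun z hz => ?_⟩
  rw [hf.apply_fricke z hz]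
  ring

theorem pow (hf : IsFrickeForm ε w f) (n : ℕ) :
    IsFrickeForm (ε ^ n) (w * n) (fun z => f z ^ n) := by
  obtain ⟨F, hF⟩ := hf.exists_qExpansion
  refine ⟨⟨_, hF.pow n⟩, fun z hz => ?_⟩
  rw [hf.apply_fricke z hz]
  ring

end IsFrickeForm

theorem E2_fricke {z : ℂ} (hz : z ∈ UHP) :
    E2 (fricke z) = 9 * z ^ 2 * E2 (3 * z) + 18 * z / (Real.pi * I) := by
  rw [fricke, E2_neg_one_div (three_mul_mem_UHP hz)]
  ring

theorem M2star3_fricke {z : ℂ} (hz : z ∈ UHP) :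
    M2star3 (fricke z) = (√3 * z) ^ 2 * M2star3 z + 9 / (Real.pi * I) * z := by
  rw [M2star3, E2_fricke hz, three_mul_fricke hz, E2_neg_one_div hz, M2star3, mul_pow,
    sqrt_three_sq]
  ring

theorem isFrickeForm_M2minus3 : IsFrickeForm (-1) 2 M2minus3 := by
  obtain ⟨F, hF, -⟩ := hasQCoeffs_M2minus3
  refine ⟨⟨F, hF⟩, fun z hz => ?_⟩
  rw [M2minus3, E2_fricke hz, three_mul_fricke hz, E2_neg_one_div hz, M2minus3, mul_pow,
    sqrt_three_sq]
  ring

theorem isFrickeForm_M4plus3 : IsFrickeForm 1 4 M4plus3 := by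
  obtain ⟨F, hF, -⟩ := hasQCoeffs_M4plus3
  refine ⟨⟨F, hF⟩, fun z hz => ?_⟩
  rw [M4plus3, three_mul_fricke hz, fricke, E4_neg_one_div (three_mul_mem_UHP hz),
    E4_neg_one_div hz, M4plus3, pow_mul (√3 * z : ℂ) 2 2, mul_pow (√3 : ℂ), sqrt_three_sq]
  ring

theorem isFrickeForm_M6fun : IsFrickeForm (-1) 6 M6fun := by
  refine ⟨⟨_, hasQExpansion_M6fun⟩, fun z hz => ?_⟩
  have hI : I ^ 6 = -1 := by rw [pow_mul I 2 3, I_sq]; norm_num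
  rw [M6fun_eq_etaProduct hz, M6fun_eq_etaProduct (fricke_mem_UHP hz), etaProduct, etaProduct,
    three_mul_fricke hz, fricke, pow_mul _ 2 3, pow_mul (ModularForm.eta (-1 / z)) 2 3,
    eta_neg_one_div_sq hz, eta_neg_one_div_sq (three_mul_mem_UHP hz), mul_pow (√3 : ℂ),
    pow_mul (√3 : ℂ) 2 3, sqrt_three_sq]
  linear_combination 27 * z ^ 6 * ModularForm.eta z ^ 6 * ModularForm.eta (3 * z) ^ 6 * hI

/-! ### Dividing by powers of `M₆` -/

section Vanishing

variable {ε ε' : ℂ} {w n : ℕ} {f g G : ℂ → ℂ} {a b z : ℂ}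

theorem hasQExpansion_div_M6fun_pow (hG : DifferentiableOn ℂ G (ball 0 1))
    (hfG : ∀ z ∈ UHP, f z = qexp z ^ n * G (qexp z)) :
    HasQExpansion (fun z => f z / M6fun z ^ n) fun q => G q / M6unit q ^ n := by
  refine ⟨hG.div (differentiableOn_M6unit.pow n) fun q hq => pow_ne_zero _ (M6unit_ne_zero hq),
    fun z hz => ?_⟩
  rw [hfG z hz, hasQExpansion_M6fun.eq_comp z hz, mul_pow,
    mul_div_mul_left _ _ (pow_ne_zero _ (qexp_ne_zero z))]

namespace IsFrickeForm

theorem div_M6fun_pow (hf : IsFrickeForm ε (w + 6 * n) f) (hG : DifferentiableOn ℂ G (ball 0 1))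
    (hfG : ∀ z ∈ UHP, f z = qexp z ^ n * G (qexp z)) :
    IsFrickeForm (ε * (-1) ^ n) w (fun z => f z / M6fun z ^ n) := by
  refine ⟨⟨_, hasQExpansion_div_M6fun_pow hG hfG⟩, fun z hz => ?_⟩
  have hM6 := M6fun_ne_zero hz
  have hz3 := sqrt_three_mul_ne_zero hz
  have hsign : ((-1 : ℂ) ^ n) ^ 2 = 1 := by rw [← pow_mul, mul_comm, pow_mul]; simp
  rw [hf.apply_fricke z hz, isFrickeForm_M6fun.apply_fricke z hz, mul_pow _ (M6fun z),
    mul_pow (-1 : ℂ), ← pow_mul, pow_add]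
  generalize (√3 * z : ℂ) = s at *
  field_simp
  rw [hsign, mul_one]

/-- Divided by `M₆ⁿ`, the form has weight `w - 6n < 0`. -/
theorem eq_zero_of_weight_lt (hε : ‖ε‖ = 1) (hf : IsFrickeForm ε w f)
    (hG : DifferentiableOn ℂ G (ball 0 1)) (hfG : ∀ z ∈ UHP, f z = qexp z ^ n * G (qexp z))
    (hw : w < 6 * n) (hz : z ∈ UHP) : f z = 0 := by
  have hdiv : f z / M6fun z ^ n = 0 := by
    refine (hasQExpansion_div_M6fun_pow hG hfG).eq_zero_of_negative_weight
      (Nat.sub_pos_of_lt hw).ne' (fun z hz => ?_) hz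
    have hM6 := norm_ne_zero_iff.2 (M6fun_ne_zero hz)
    have hz3 := norm_ne_zero_iff.2 (sqrt_three_mul_ne_zero hz)
    rw [hf.apply_fricke z hz, isFrickeForm_M6fun.apply_fricke z hz]
    generalize (√3 * z : ℂ) = s at *
    simp only [norm_div, norm_mul, norm_pow, norm_neg, norm_one, hε, one_mul, one_pow, mul_pow,
      ← pow_mul]
    rw [pow_sub₀ _ hz3 hw.le]
    field_simp
  exact (div_eq_zero_iff.1 hdiv).resolve_right (pow_ne_zero _ (M6fun_ne_zero hz))

theorem eq_of_hasQCoeffs (hε : ‖ε‖ = 1) (hf : IsFrickeForm ε w f) (hg : IsFrickeForm ε w g)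
    (hw : w < 12) (hfq : HasQCoeffs f a b) (hgq : HasQCoeffs g a b) (hz : z ∈ UHP) :
    f z = g z := by
  obtain ⟨G, hG, hfG⟩ := ((hfq.sub hgq).cast (sub_self a)
    (sub_self b)).exists_eq_qexp_sq_mul
  exact sub_eq_zero.1 (eq_zero_of_weight_lt (f := fun z => f z - g z) hε (hf.sub hg) hG hfG hw hz)

theorem eq_of_apply_zero_eq {F : ℂ → ℂ} (hε : ‖ε‖ = 1) (hf : IsFrickeForm ε w f)
    (hg : IsFrickeForm ε w g) (hw : w < 6) (hfF : HasQExpansion f F) (hgG : HasQExpansion g G)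
    (h0 : F 0 = G 0) (hz : z ∈ UHP) : f z = g z := by
  have hsub := hfF.sub hgG
  obtain ⟨T, hT, hFT⟩ := exists_eq_id_mul_of_apply_zero hsub.differentiableOn (sub_eq_zero.2 h0)
  exact sub_eq_zero.1 (eq_zero_of_weight_lt (f := fun z => f z - g z) (n := 1) hε (hf.sub hg) hT
    (fun z hz => by rw [hsub.eq_comp z hz, hFT, pow_one]) hw hz)

theorem eq_mul_M2minus3_sq_mul (hf : IsFrickeForm ((-1) ^ n) (6 * n + 4) f)
    (hG : DifferentiableOn ℂ G (ball 0 1)) (hfG : ∀ z ∈ UHP, f z = qexp z ^ n * G (qexp z))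
    (hz : z ∈ UHP) : f z = G 0 * (M2minus3 z ^ 2 * M6fun z ^ n) := by
  obtain ⟨M, hM, hM0, -⟩ := hasQCoeffs_M2minus3
  have hdiv : IsFrickeForm 1 4 fun z => f z / M6fun z ^ n :=
    ((hf.cast rfl (add_comm _ _)).div_M6fun_pow hG hfG).cast (by simp [← mul_pow]) rfl
  have heq : f z / M6fun z ^ n = G 0 * M2minus3 z ^ 2 :=
    hdiv.eq_of_apply_zero_eq norm_one
      (((isFrickeForm_M2minus3.pow 2).const_mul (G 0)).cast (by norm_num) rfl) (by norm_num)
      (hasQExpansion_div_M6fun_pow hG hfG) ((hM.pow 2).const_mul (G 0))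
      (by simp [hM0, M6unit_zero]) hz
  rw [div_eq_iff (pow_ne_zero n (M6fun_ne_zero hz))] at heq
  linear_combination heq

theorem exists_eq_mul_M6fun_pow (hf : IsFrickeForm ((-1) ^ n) (6 * n + 8) f)
    (hG : DifferentiableOn ℂ G (ball 0 1)) (hfG : ∀ z ∈ UHP, f z = qexp z ^ n * G (qexp z)) :
    ∃ β, ∀ z ∈ UHP, f z = (G 0 * M2minus3 z ^ 4 + β * (M2minus3 z * M6fun z)) * M6fun z ^ n := by
  have hexp := hasQExpansion_div_M6fun_pow hG hfG
  have hdiv : IsFrickeForm 1 8 fun z => f z / M6fun z ^ n :=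
    ((hf.cast rfl (add_comm _ _)).div_M6fun_pow hG hfG).cast (by simp [← mul_pow]) rfl
  have hderiv := (hexp.differentiableAt (mem_ball_self one_pos)).hasDerivAt
  set b := deriv (fun q => G q / M6unit q ^ n) 0
  refine ⟨b - 48 * G 0, fun z hz => ?_⟩
  rw [← div_eq_iff (pow_ne_zero n (M6fun_ne_zero hz))]
  refine eq_of_hasQCoeffs (f := fun z => f z / M6fun z ^ n)
    (g := fun z => G 0 * M2minus3 z ^ 4 + (b - 48 * G 0) * (M2minus3 z * M6fun z)) norm_one hdiv
    (.add ?_ ?_) (by norm_num) ⟨_, hexp, rfl, hderiv⟩ ?_ hz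
  · exact ((isFrickeForm_M2minus3.pow 4).const_mul _).cast (by norm_num) rfl
  · exact ((isFrickeForm_M2minus3.mul isFrickeForm_M6fun).const_mul _).cast (by norm_num) rfl
  · exact (((hasQCoeffs_M2minus3.pow 4).const_mul _).add
      ((hasQCoeffs_M2minus3.mul hasQCoeffs_M6fun).const_mul _)).cast
      (by simp [M6unit_zero]) (by ring)

end IsFrickeForm

end Vanishing

theorem M4plus3_eq_sq {z : ℂ} (hz : z ∈ UHP) : M4plus3 z = M2minus3 z ^ 2 :=
  isFrickeForm_M4plus3.eq_of_hasQCoeffs norm_one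
    ((isFrickeForm_M2minus3.pow 2).cast (by norm_num) rfl) (by norm_num)
    hasQCoeffs_M4plus3
    ((hasQCoeffs_M2minus3.pow 2).cast (by norm_num) (by norm_num)) hz

/-! ### The Serre derivative and Ramanujan's identities -/

theorem theta_fricke {f F J : ℂ → ℂ} {d z : ℂ} (hf : HasQExpansion f F)
    (hJ : ∀ z ∈ UHP, f (fricke z) = J z) (hd : HasThetaDerivAt J d z) (hz : z ∈ UHP) :
    theta f (fricke z) = (√3 * z) ^ 2 * d := by
  have hz0 := ne_zero_of_mem_UHP hz
  have hcomp := HasDerivAt.comp z (hf.hasThetaDerivAt (fricke_mem_UHP hz)) (hasDerivAt_fricke hz)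
  have hunique := hcomp.unique (hd.congr_of_eqOn hz hJ)
  rw [mul_assoc, mul_right_inj' two_pi_I_ne_zero] at hunique
  rw [mul_pow, sqrt_three_sq, ← hunique]
  field_simp

theorem hasThetaDerivAt_const_mul_id (c z : ℂ) :
    HasThetaDerivAt (fun z => c * z) (c / (2 * Real.pi * I)) z :=
  ((hasDerivAt_id z).const_mul c).congr_deriv (by field_simp [two_pi_I_ne_zero])

theorem hasThetaDerivAt_sqrt_three_mul_pow (w : ℕ) {z : ℂ} (hz : z ∈ UHP) :
    HasThetaDerivAt (fun z => (√3 * z) ^ w) (w / (2 * Real.pi * I * z) * (√3 * z) ^ w) z := by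
  have hz0 := ne_zero_of_mem_UHP hz
  refine ((hasThetaDerivAt_const_mul_id (√3 : ℂ) z).pow w).congr_theta ?_
  cases w with
  | zero => simp
  | succ w =>
    rw [Nat.add_sub_cancel, pow_succ]
    field_simp

/-- The Serre derivative `θ f - (w/6) M₂* f` in weight `w`. -/
def serreDeriv (w : ℂ) (f : ℂ → ℂ) (z : ℂ) : ℂ := theta f z - w / 6 * M2star3 z * f z

theorem theta_eq_serreDeriv_add (w : ℂ) (f : ℂ → ℂ) (z : ℂ) :
    theta f z = serreDeriv w f z + w / 6 * M2star3 z * f z := by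
  rw [serreDeriv]
  ring

theorem HasQExpansion.exists_serreDeriv {f F : ℂ → ℂ} (w : ℂ) (hf : HasQExpansion f F) :
    ∃ G, HasQExpansion (serreDeriv w f) G :=
  let ⟨_, hΦ, _⟩ := hasQCoeffs_M2star3
  ⟨_, hf.theta.sub ((hΦ.const_mul (w / 6)).mul hf)⟩

theorem IsFrickeForm.serreDeriv {ε : ℂ} {w : ℕ} {f : ℂ → ℂ} (hf : IsFrickeForm ε w f) :
    IsFrickeForm ε (w + 2) (serreDeriv w f) := by
  obtain ⟨F, hF⟩ := hf.exists_qExpansion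
  refine ⟨hF.exists_serreDeriv w, fun z hz => ?_⟩
  have hz0 := ne_zero_of_mem_UHP hz
  have hpi : (Real.pi : ℂ) ≠ 0 := ofReal_ne_zero.2 Real.pi_ne_zero
  have hJ := ((hasThetaDerivAt_sqrt_three_mul_pow w hz).const_mul ε).mul (hF.hasThetaDerivAt hz)
  rw [FrickeThree.serreDeriv, theta_fricke hF hf.apply_fricke hJ hz, M2star3_fricke hz,
    hf.apply_fricke z hz, FrickeThree.serreDeriv, pow_add, mul_pow (√3 : ℂ) z 2, sqrt_three_sq]
  field_simp
  ring

theorem isFrickeForm_theta_M2star3_sub :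
    IsFrickeForm 1 4 fun z => theta M2star3 z - 1 / 6 * M2star3 z ^ 2 := by
  obtain ⟨Φ, hΦ, -⟩ := hasQCoeffs_M2star3
  refine ⟨⟨_, hΦ.theta.sub ((hΦ.pow 2).const_mul (1 / 6))⟩, fun z hz => ?_⟩
  have hz0 := ne_zero_of_mem_UHP hz
  have hpi : (Real.pi : ℂ) ≠ 0 := ofReal_ne_zero.2 Real.pi_ne_zero
  have hJ := ((hasThetaDerivAt_sqrt_three_mul_pow 2 hz).mul (hΦ.hasThetaDerivAt hz)).add
    (hasThetaDerivAt_const_mul_id (9 / (Real.pi * I)) z)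
  rw [theta_fricke hΦ (fun z hz => M2star3_fricke hz) hJ hz, M2star3_fricke hz,
    pow_mul (√3 * z : ℂ) 2 2, mul_pow (√3 : ℂ) z 2, sqrt_three_sq]
  field_simp
  push_cast
  ring

theorem hasThetaDerivAt_M2star3 {z : ℂ} (hz : z ∈ UHP) :
    HasThetaDerivAt M2star3 ((M2star3 z ^ 2 - M2minus3 z ^ 2) / 6) z := by
  have hsq : theta M2star3 z - 1 / 6 * M2star3 z ^ 2 = -1 / 6 * M2minus3 z ^ 2 :=
    isFrickeForm_theta_M2star3_sub.eq_of_hasQCoeffs norm_one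
      (((isFrickeForm_M2minus3.pow 2).const_mul (-1 / 6)).cast (by norm_num) rfl)
      (by norm_num)
      (hasQCoeffs_M2star3.theta.sub ((hasQCoeffs_M2star3.pow 2).const_mul (1 / 6)))
      (((hasQCoeffs_M2minus3.pow 2).const_mul (-1 / 6)).cast (by norm_num)
        (by norm_num)) hz
  obtain ⟨Φ, hΦ, -⟩ := hasQCoeffs_M2star3
  exact (hΦ.hasThetaDerivAt hz).congr_theta (by linear_combination hsq)

/-- The Serre derivative of `M₂`, of weight 4. -/
def serreM2 : ℂ → ℂ := serreDeriv 2 M2minus3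

theorem isFrickeForm_serreM2 : IsFrickeForm (-1) 4 serreM2 := isFrickeForm_M2minus3.serreDeriv

theorem hasQCoeffs_serreDeriv {f : ℂ → ℂ} {a b : ℂ} (w : ℂ) (hf : HasQCoeffs f a b) :
    HasQCoeffs (serreDeriv w f) (-(w / 6 * a)) (b - w / 6 * (b - 6 * a)) :=
  (hf.theta.sub ((hasQCoeffs_M2star3.const_mul (w / 6)).mul hf)).cast
    (by ring) (by ring)

theorem hasQCoeffs_serreM2 : HasQCoeffs serreM2 (-1 / 3) 10 :=
  (hasQCoeffs_serreDeriv 2 hasQCoeffs_M2minus3).cast (by norm_num) (by norm_num)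

theorem hasThetaDerivAt_M2minus3 {z : ℂ} (hz : z ∈ UHP) :
    HasThetaDerivAt M2minus3 (serreM2 z + M2star3 z * M2minus3 z / 3) z :=
  (isFrickeForm_M2minus3.hasThetaDerivAt hz).congr_theta (by rw [serreM2, serreDeriv]; ring)

theorem serreM2_sq {z : ℂ} (hz : z ∈ UHP) :
    serreM2 z ^ 2 = 1 / 9 * M2minus3 z ^ 4 - 12 * (M2minus3 z * M6fun z) := by
  refine IsFrickeForm.eq_of_hasQCoeffs (f := fun z => serreM2 z ^ 2)
    (g := fun z => 1 / 9 * M2minus3 z ^ 4 - 12 * (M2minus3 z * M6fun z)) (ε := 1) (w := 8)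
    (a := 1 / 9) (b := -20 / 3) norm_one ?_ (.sub ?_ ?_) (by norm_num) ?_ ?_ hz
  · exact (isFrickeForm_serreM2.pow 2).cast (by norm_num) rfl
  · exact ((isFrickeForm_M2minus3.pow 4).const_mul (1 / 9)).cast (by norm_num) rfl
  · exact ((isFrickeForm_M2minus3.mul isFrickeForm_M6fun).const_mul 12).cast
      (by norm_num) rfl
  · exact (hasQCoeffs_serreM2.pow 2).cast (by norm_num) (by norm_num)
  · exact (((hasQCoeffs_M2minus3.pow 4).const_mul (1 / 9)).sub
      ((hasQCoeffs_M2minus3.mul hasQCoeffs_M6fun).const_mul 12)).cast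
      (by norm_num) (by norm_num)

theorem serreDeriv_serreM2 {z : ℂ} (hz : z ∈ UHP) :
    serreDeriv 4 serreM2 z = 2 / 9 * M2minus3 z ^ 3 - 6 * M6fun z := by
  refine IsFrickeForm.eq_of_hasQCoeffs (f := serreDeriv 4 serreM2)
    (g := fun z => 2 / 9 * M2minus3 z ^ 3 - 6 * M6fun z) (ε := -1) (w := 6) (a := 2 / 9) (b := 2)
    (by simp) isFrickeForm_serreM2.serreDeriv (.sub ?_ (isFrickeForm_M6fun.const_mul 6))
    (by norm_num) ?_ ?_ hz
  · exact ((isFrickeForm_M2minus3.pow 3).const_mul (2 / 9)).cast (by norm_num) rfl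
  · exact (hasQCoeffs_serreDeriv 4 hasQCoeffs_serreM2).cast (by norm_num)
      (by norm_num)
  · exact (((hasQCoeffs_M2minus3.pow 3).const_mul (2 / 9)).sub
      (hasQCoeffs_M6fun.const_mul 6)).cast (by norm_num) (by norm_num)

theorem hasThetaDerivAt_serreM2 {z : ℂ} (hz : z ∈ UHP) :
    HasThetaDerivAt serreM2
      (2 / 3 * M2star3 z * serreM2 z + 2 / 9 * M2minus3 z ^ 3 - 6 * M6fun z) z :=
  (isFrickeForm_serreM2.hasThetaDerivAt hz).congr_theta (by
    rw [theta_eq_serreDeriv_add 4, serreDeriv_serreM2 hz]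
    ring)

/-! ### Modular forms on `Γ₀⁺(3)` as Fricke forms -/

/-- The translation `(1 1; 0 1)`. -/
def translation : SL2R := toR ⟨!![1, 1; 0, 1], by simp⟩

theorem translation_mem_GammaPlus3 : translation ∈ GammaPlus3 :=
  Subgroup.subset_closure (.inl ⟨_, CongruenceSubgroup.Gamma0_mem.2 (by simp), rfl⟩)

theorem S3elt_mem_GammaPlus3 : S3elt ∈ GammaPlus3 := Subgroup.subset_closure (.inr rfl)

theorem coe_translation : translation.1 = !![1, 1; 0, 1] := by
  ext i j
  change (((!![1, 1; 0, 1] : Matrix (Fin 2) (Fin 2) ℤ) i j : ℤ) : ℝ) = _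
  fin_cases i <;> fin_cases j <;> simp

theorem translation_mul_S3elt : translation * S3elt = R3elt := by
  apply Subtype.ext
  change translation.1 * S3elt.1 = R3elt.1
  rw [coe_translation, S3elt, R3elt]
  ext i j
  fin_cases i <;> fin_cases j <;> simp [Matrix.mul_apply, Fin.sum_univ_two]

theorem moeb_translation (z : ℂ) : moeb translation z = z + 1 := by simp [moeb, coe_translation]

theorem jfac_translation (z : ℂ) : jfac translation z = 1 := by simp [jfac, coe_translation]

theorem moeb_S3elt {z : ℂ} (hz : z ∈ UHP) : moeb S3elt z = fricke z := by
  have hz0 := ne_zero_of_mem_UHP hz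
  have hsqrt := sqrt_three_ne_zero
  simp only [moeb, S3elt, fricke, cons_val', cons_val_zero, cons_val_one, cons_val_fin_one,
    of_apply, ofReal_zero, ofReal_neg, ofReal_inv, zero_mul, zero_add, add_zero]
  field_simp
  rw [sqrt_three_sq]

theorem jfac_S3elt (z : ℂ) : jfac S3elt z = √3 * z := by simp [jfac, S3elt]

theorem periodic_indicator_UHP {f : ℂ → ℂ} (hT : ∀ z ∈ UHP, f (z + 1) = f z) :
    Function.Periodic (UHP.indicator f) ((1 : ℝ) : ℂ) := by
  intro z
  rw [ofReal_one]
  by_cases hz : z ∈ UHP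
  · rw [Set.indicator_of_mem hz, Set.indicator_of_mem (add_one_mem_UHP hz), hT z hz]
  · rw [Set.indicator_of_notMem hz, Set.indicator_of_notMem (by simpa [UHP] using hz)]

theorem exists_hasQExpansion_of_periodic {f : ℂ → ℂ} (hd : DifferentiableOn ℂ f UHP)
    (hT : ∀ z ∈ UHP, f (z + 1) = f z) {C : ℝ} (hC : ∀ z ∈ UHP, 1 ≤ z.im → ‖f z‖ ≤ C) :
    ∃ G, HasQExpansion f G := by
  have hper := periodic_indicator_UHP hT
  have heq (z : ℂ) (hz : z ∈ UHP) : UHP.indicator f z = f z := Set.indicator_of_mem hz f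
  have hdiff (z : ℂ) (hz : z ∈ UHP) : DifferentiableAt ℂ (UHP.indicator f) z :=
    (hd.differentiableAt (isOpen_UHP.mem_nhds hz)).congr_of_eventuallyEq
      (eventually_of_mem (isOpen_UHP.mem_nhds hz) heq)
  refine ⟨Function.Periodic.cuspFunction 1 (UHP.indicator f), fun q hq => ?_, fun z hz => ?_⟩
  · refine DifferentiableAt.differentiableWithinAt ?_
    rcases eq_or_ne q 0 with rfl | hq0
    · refine Function.Periodic.differentiableAt_cuspFunction_zero one_pos hper ?_
        (Asymptotics.IsBigO.of_bound C ?_)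
      · filter_upwards [(eventually_gt_atTop (0 : ℝ)).comap im] with z hz using hdiff z hz
      · filter_upwards [(eventually_ge_atTop (1 : ℝ)).comap im] with z hz
        have hzU : z ∈ UHP := one_pos.trans_le hz
        simpa [heq z hzU] using hC z hzU hz
    · obtain ⟨z, hz, rfl, -⟩ := exists_qexp_eq hq0 (mem_ball_zero_iff.1 hq)
      rw [qexp_eq_qParam]
      exact Function.Periodic.differentiableAt_cuspFunction one_ne_zero hper (hdiff z hz)
  · rw [qexp_eq_qParam, Function.Periodic.eq_cuspFunction one_ne_zero hper, heq z hz]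

theorem isFrickeForm_of_MFchar {χ : SL2R → ℂ}
    (hχmul : ∀ γ ∈ GammaPlus3, ∀ δ ∈ GammaPlus3, χ (γ * δ) = χ γ * χ δ)
    (hχS : χ S3elt = -I) (hχR : χ R3elt = -I) {k w : ℕ} {f : ℂ → ℂ}
    (hf : MFchar GammaPlus3 (fun γ => χ γ ^ k) w f) : IsFrickeForm ((-I) ^ k) w f := by
  obtain ⟨hd, htransform, C, hC⟩ := hf
  have hχT : χ translation = 1 := by
    have hmul := hχmul _ translation_mem_GammaPlus3 _ S3elt_mem_GammaPlus3
    rw [translation_mul_S3elt, hχS, hχR] at hmul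
    exact mul_right_cancel₀ (neg_ne_zero.2 I_ne_zero) (hmul.symm.trans (one_mul _).symm)
  refine ⟨exists_hasQExpansion_of_periodic hd (fun z hz => ?_) hC, fun z hz => ?_⟩
  · simpa [moeb_translation, jfac_translation, hχT] using
      htransform _ translation_mem_GammaPlus3 z hz
  · simpa [moeb_S3elt hz, jfac_S3elt, hχS] using htransform _ S3elt_mem_GammaPlus3 z hz

/-! ### The order of vanishing at the cusp -/

theorem HasQExpansion.tendsto_div_pow_of_VOrder {f G : ℂ → ℂ} {k : ℕ} {c : ℂ}
    (hG : HasQExpansion f G) (hc : ∀ ε : ℝ, 0 < ε → ∃ Y : ℝ, ∀ z : ℂ, Y ≤ z.im →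
      ‖cexp (-(2 * Real.pi * I * ((k : ℝ) : ℂ) * z / ((1 : ℝ) : ℂ))) * f z - c‖ < ε) :
    Tendsto (fun q => G q / q ^ k) (𝓝[≠] 0) (𝓝 c) := by
  rw [Metric.tendsto_nhds]
  intro ε hε
  obtain ⟨Y, hY⟩ := hc ε hε
  have hball : ball (0 : ℂ) (min 1 (Real.exp (-2 * Real.pi * Y))) ∈ 𝓝 (0 : ℂ) :=
    ball_mem_nhds _ (by positivity)
  filter_upwards [self_mem_nhdsWithin, mem_nhdsWithin_of_mem_nhds hball] with q hq0 hq
  rw [mem_ball_zero_iff, lt_min_iff] at hq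
  obtain ⟨z, hz, rfl, -⟩ := exists_qexp_eq hq0 hq.1
  have hYz : Y ≤ z.im := by
    have hexp := hq.2
    rw [norm_qexp, Real.exp_lt_exp] at hexp
    nlinarith [Real.pi_pos]
  have hpow : cexp (-(2 * Real.pi * I * ((k : ℝ) : ℂ) * z / ((1 : ℝ) : ℂ))) = (qexp z ^ k)⁻¹ := by
    rw [qexp, ← exp_nat_mul, ← exp_neg]
    push_cast
    ring_nf
  have hlt := hY z hYz
  rwa [hpow, hG.eq_comp z hz, mul_comm, ← div_eq_mul_inv, ← dist_eq_norm] at hlt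

theorem HasQExpansion.exists_eq_qexp_pow_mul_of_VOrder {f G : ℂ → ℂ} (hG : HasQExpansion f G)
    {k : ℕ} (hk : VOrder 1 f k) : ∃ g, DifferentiableOn ℂ g (ball 0 1) ∧
      (∀ z ∈ UHP, f z = qexp z ^ k * g (qexp z)) ∧ g 0 ≠ 0 := by
  obtain ⟨c, hc0, hc⟩ := hk
  refine ⟨Function.update (fun q => G q / q ^ k) 0 c, ?_, fun z hz => ?_, by simpa using hc0⟩
  · refine (differentiableOn_compl_singleton_and_continuousAt_iff
      (ball_mem_nhds (0 : ℂ) one_pos)).1 ⟨?_, ?_⟩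
    · have hdiv : DifferentiableOn ℂ (fun q => G q / q ^ k) (ball 0 1 \ {0}) :=
        (hG.differentiableOn.mono Set.sdiff_subset).div (by fun_prop) fun q hq =>
          pow_ne_zero k hq.2
      exact hdiv.congr fun q hq => Function.update_of_ne hq.2 _ _
    · exact continuousAt_update_same.2 (hG.tendsto_div_pow_of_VOrder hc)
  · rw [Function.update_of_ne (qexp_ne_zero z),
      mul_div_cancel₀ _ (pow_ne_zero k (qexp_ne_zero z)), hG.eq_comp z hz]

/-! ### Quasimodular forms of depth one -/

/-- The quasimodular form `f₀ + M₂* f₁`, given by its pair `(f₀, f₁)` of modular coefficients. -/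
def quasi (f₀ f₁ : ℂ → ℂ) (z : ℂ) : ℂ := f₀ z + M2star3 z * f₁ z

/-- The first coefficient of the Serre derivative in weight `w + 1` of `f₀ + M₂* f₁`, where `f₀` and
`f₁` have weights `w + 2` and `w`. -/
def serreFst (w : ℕ) (f₀ f₁ : ℂ → ℂ) (z : ℂ) : ℂ :=
  serreDeriv ↑(w + 2) f₀ z - 1 / 6 * (M2minus3 z ^ 2 * f₁ z)

/-- The second coefficient of the Serre derivative in weight `w + 1` of `f₀ + M₂* f₁`. -/
def serreSnd (w : ℕ) (f₀ f₁ : ℂ → ℂ) (z : ℂ) : ℂ := serreDeriv w f₁ z + 1 / 6 * f₀ z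

/-- The determinant of the coefficient pairs of `f₀ + M₂* f₁` and `g₀ + M₂* g₁`. -/
def pairDet (f₀ f₁ g₀ g₁ : ℂ → ℂ) (z : ℂ) : ℂ := f₀ z * g₁ z - f₁ z * g₀ z

section QuasiPair

variable {ε ε' : ℂ} {w w' : ℕ} {f₀ f₁ g₀ g₁ : ℂ → ℂ} {z : ℂ}

theorem IsFrickeForm.serreFst (h₀ : IsFrickeForm ε (w + 2) f₀) (h₁ : IsFrickeForm ε w f₁) :
    IsFrickeForm ε (w + 2 + 2) (serreFst w f₀ f₁) :=
  h₀.serreDeriv.sub ((((isFrickeForm_M2minus3.pow 2).mul h₁).const_mul (1 / 6)).cast (by ring)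
    (by ring))

theorem IsFrickeForm.serreSnd (h₀ : IsFrickeForm ε (w + 2) f₀) (h₁ : IsFrickeForm ε w f₁) :
    IsFrickeForm ε (w + 2) (serreSnd w f₀ f₁) :=
  h₁.serreDeriv.add (h₀.const_mul (1 / 6))

theorem IsFrickeForm.hasThetaDerivAt_serreFst (h₀ : IsFrickeForm ε (w + 2) f₀) (hz : z ∈ UHP) :
    HasThetaDerivAt f₀ (FrickeThree.serreFst w f₀ f₁ z + (w + 2) / 6 * M2star3 z * f₀ z
      + 1 / 6 * (M2minus3 z ^ 2 * f₁ z)) z :=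
  (h₀.hasThetaDerivAt hz).congr_theta (by
    rw [FrickeThree.serreFst, FrickeThree.serreDeriv]
    push_cast
    ring)

theorem IsFrickeForm.hasThetaDerivAt_serreSnd (h₁ : IsFrickeForm ε w f₁) (hz : z ∈ UHP) :
    HasThetaDerivAt f₁
      (FrickeThree.serreSnd w f₀ f₁ z + w / 6 * M2star3 z * f₁ z - 1 / 6 * f₀ z) z :=
  (h₁.hasThetaDerivAt hz).congr_theta (by
    rw [FrickeThree.serreSnd, FrickeThree.serreDeriv]
    ring)

theorem serreDeriv_quasi (h₀ : IsFrickeForm ε (w + 2) f₀) (h₁ : IsFrickeForm ε w f₁)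
    (hz : z ∈ UHP) :
    serreDeriv (w + 1) (quasi f₀ f₁) z = quasi (serreFst w f₀ f₁) (serreSnd w f₀ f₁) z := by
  have htheta : theta (quasi f₀ f₁) z = _ :=
    ((h₀.hasThetaDerivAt_serreFst (f₁ := f₁) hz).add
      ((hasThetaDerivAt_M2star3 hz).mul (h₁.hasThetaDerivAt_serreSnd (f₀ := f₀) hz))).theta_eq
  rw [serreDeriv, htheta, quasi, quasi]
  ring

theorem pairDet_eq_quasi_mul_sub (f₀ f₁ g₀ g₁ : ℂ → ℂ) (z : ℂ) :
    pairDet f₀ f₁ g₀ g₁ z = quasi f₀ f₁ z * g₁ z - f₁ z * quasi g₀ g₁ z := by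
  rw [pairDet, quasi, quasi]
  ring

theorem IsFrickeForm.pairDet (hf₀ : IsFrickeForm ε (w + 2) f₀) (hf₁ : IsFrickeForm ε w f₁)
    (hg₀ : IsFrickeForm ε' (w' + 2) g₀) (hg₁ : IsFrickeForm ε' w' g₁) :
    IsFrickeForm (ε * ε') (w + w' + 2) (pairDet f₀ f₁ g₀ g₁) :=
  ((hf₀.mul hg₁).cast rfl (by ring)).sub (hf₁.mul hg₀)

theorem exists_pairDet_eq_qexp_pow_mul {n : ℕ} {F G : ℂ → ℂ}
    (hF : DifferentiableOn ℂ F (ball 0 1)) (hG : DifferentiableOn ℂ G (ball 0 1))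
    (hf : ∀ z ∈ UHP, quasi f₀ f₁ z = qexp z ^ n * F (qexp z))
    (hg : ∀ z ∈ UHP, quasi g₀ g₁ z = qexp z ^ n * G (qexp z))
    (hf₁ : IsFrickeForm ε w f₁) (hg₁ : IsFrickeForm ε' w' g₁) :
    ∃ D, DifferentiableOn ℂ D (ball 0 1) ∧
      ∀ z ∈ UHP, pairDet f₀ f₁ g₀ g₁ z = qexp z ^ n * D (qexp z) := by
  obtain ⟨F₁, hF₁⟩ := hf₁.exists_qExpansion
  obtain ⟨G₁, hG₁⟩ := hg₁.exists_qExpansion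
  refine ⟨fun q => F q * G₁ q - F₁ q * G q,
    (hF.mul hG₁.differentiableOn).sub (hF₁.differentiableOn.mul hG), fun z hz => ?_⟩
  rw [pairDet_eq_quasi_mul_sub, hf z hz, hg z hz, hF₁.eq_comp z hz, hG₁.eq_comp z hz]
  ring

theorem hasThetaDerivAt_pairDet_serre (h₀ : IsFrickeForm ε (w + 2) f₀)
    (h₁ : IsFrickeForm ε w f₁) (hg₀ : IsFrickeForm ε' (w + 2 + 2) g₀)
    (hg₁ : IsFrickeForm ε' (w + 2) g₁) (hz : z ∈ UHP) :
    HasThetaDerivAt (pairDet f₀ f₁ g₀ g₁)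
      (pairDet (serreFst w f₀ f₁) (serreSnd w f₀ f₁) g₀ g₁ z
        + pairDet f₀ f₁ (serreFst (w + 2) g₀ g₁) (serreSnd (w + 2) g₀ g₁) z
        + (w + 2) / 3 * M2star3 z * pairDet f₀ f₁ g₀ g₁ z) z :=
  (((h₀.hasThetaDerivAt_serreFst (f₁ := f₁) hz).mul
      (hg₁.hasThetaDerivAt_serreSnd (f₀ := g₀) hz)).sub
    ((h₁.hasThetaDerivAt_serreSnd (f₀ := f₀) hz).mul
      (hg₀.hasThetaDerivAt_serreFst (f₁ := g₁) hz))).congr_theta (by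
    simp only [pairDet]
    push_cast
    ring)

theorem exists_serreDeriv_eq_qexp_pow_mul {f g : ℂ → ℂ} {n : ℕ} (w : ℂ)
    (hg : DifferentiableOn ℂ g (ball 0 1)) (hfg : ∀ z ∈ UHP, f z = qexp z ^ n * g (qexp z)) :
    ∃ g', DifferentiableOn ℂ g' (ball 0 1) ∧ g' 0 = (n - w / 6) * g 0 ∧
      ∀ z ∈ UHP, serreDeriv w f z = qexp z ^ n * g' (qexp z) := by
  obtain ⟨Φ, hΦ, hΦ0, -⟩ := hasQCoeffs_M2star3
  have hf : HasQExpansion f fun q => q ^ n * g q :=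
    ⟨(differentiableOn_id.pow n).mul hg, hfg⟩
  refine ⟨fun q => n * g q + q * deriv g q - w / 6 * Φ q * g q, ?_, by simp [hΦ0]; ring,
    fun z hz => ?_⟩
  · exact ((hg.const_mul _).add (differentiableOn_id.mul (hg.deriv isOpen_ball))).sub
      ((hΦ.differentiableOn.const_mul _).mul hg)
  · have hderiv := ((hasDerivAt_pow n (qexp z)).mul
      (hg.differentiableAt (isOpen_ball.mem_nhds (qexp_mem_ball hz))).hasDerivAt).deriv
    rw [serreDeriv, (hf.hasThetaDerivAt_comp hz).theta_eq, hfg z hz, hΦ.eq_comp z hz]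
    rw [show (fun q => q ^ n * g q) = (fun q => q ^ n) * g from rfl, hderiv]
    cases n with
    | zero => simp
    | succ n =>
      rw [Nat.add_sub_cancel, pow_succ]
      ring

end QuasiPair

/-! ### The elliptic point -/

/-- The elliptic point `1/2 + (√3/6) i`, the fixed point in `ℍ` of `z ↦ 1 - 1/(3z)`. -/
def rho : ℂ := 1 / 2 + √3 / 6 * I

/-- The automorphy factor `(√3 ρ)²`, a primitive sixth root of unity. -/
def rhoFactor : ℂ := 3 * rho - 1

theorem rho_mem_UHP : rho ∈ UHP := by
  change 0 < rho.im
  simp [rho]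

theorem three_mul_rho_sq : 3 * rho ^ 2 = 3 * rho - 1 := by
  rw [rho]
  linear_combination (1 / 12) * I ^ 2 * sqrt_three_sq + (1 / 4) * I_sq

theorem sqrt_three_mul_rho_sq : (√3 * rho) ^ 2 = rhoFactor := by
  rw [mul_pow, sqrt_three_sq, rhoFactor, three_mul_rho_sq]

theorem sqrt_three_mul_rho_cube : (√3 * rho) ^ 3 = I := by
  have htwo : 2 * rho - 1 = √3 / 3 * I := by
    rw [rho]
    ring
  rw [pow_succ, sqrt_three_mul_rho_sq, rhoFactor]
  linear_combination √3 * three_mul_rho_sq + √3 * htwo + I / 3 * sqrt_three_sq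

theorem rhoFactor_sq : rhoFactor ^ 2 = rhoFactor - 1 := by
  rw [rhoFactor]
  linear_combination 3 * three_mul_rho_sq

theorem rhoFactor_ne_neg_one : rhoFactor ≠ -1 := fun h => by
  have h3 := rhoFactor_sq
  rw [h] at h3
  norm_num at h3

theorem rhoFactor_ne_zero : rhoFactor ≠ 0 := fun h => by
  have h3 := rhoFactor_sq
  rw [h] at h3
  norm_num at h3

theorem rhoFactor_ne_one : rhoFactor ≠ 1 := fun h => by
  have h3 := rhoFactor_sq
  rw [h] at h3
  norm_num at h3

theorem rhoFactor_sq_ne_one : rhoFactor ^ 2 ≠ 1 :=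
  sq_ne_one_iff.2 ⟨rhoFactor_ne_one, rhoFactor_ne_neg_one⟩

theorem rhoFactor_cube_ne_one : rhoFactor ^ 3 ≠ 1 := by
  rw [show rhoFactor ^ 3 = -1 by linear_combination (rhoFactor + 1) * rhoFactor_sq]
  norm_num

theorem neg_I_pow_mul_sqrt_three_mul_rho_pow (k j : ℕ) :
    (-I) ^ k * (√3 * rho) ^ (3 * k + 2 * j) = rhoFactor ^ j := by
  rw [pow_add, pow_mul, pow_mul, sqrt_three_mul_rho_cube, sqrt_three_mul_rho_sq, ← mul_assoc,
    ← mul_pow]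
  simp

theorem fricke_rho_add_one : fricke rho + 1 = rho := by
  have hrho := ne_zero_of_mem_UHP rho_mem_UHP
  rw [fricke]
  field_simp
  linear_combination -three_mul_rho_sq

theorem fricke_add_one_sub_rho {z : ℂ} (hz : z ∈ UHP) :
    fricke z + 1 - rho = (z - rho) / ((√3 * z) * (√3 * rho)) := by
  have hz0 := ne_zero_of_mem_UHP hz
  have hrho := ne_zero_of_mem_UHP rho_mem_UHP
  have hmul : (√3 * z) * (√3 * rho) = 3 * z * rho := by linear_combination z * rho * sqrt_three_sq
  rw [hmul, fricke]
  field_simp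
  linear_combination -z * three_mul_rho_sq

section EllipticPoint

variable {ε : ℂ} {w n : ℕ} {f : ℂ → ℂ}

theorem IsFrickeForm.analyticAt_rho (hf : IsFrickeForm ε w f) : AnalyticAt ℂ f rho :=
  hf.differentiableOn.analyticAt (isOpen_UHP.mem_nhds rho_mem_UHP)

theorem IsFrickeForm.apply_fricke_add_one {z : ℂ} (hf : IsFrickeForm ε w f) (hz : z ∈ UHP) :
    f (fricke z + 1) = ε * (√3 * z) ^ w * f z := by
  obtain ⟨F, hF⟩ := hf.exists_qExpansion
  rw [hF.apply_add_one (fricke_mem_UHP hz), hf.apply_fricke z hz]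

theorem succ_le_analyticOrderAt {u : ℂ → ℂ} {c : ℂ} (hu : AnalyticAt ℂ u c)
    (hfu : ∀ᶠ z in 𝓝 c, f z = (z - c) ^ n • u z) (hu0 : u c = 0) :
    ((n + 1 : ℕ) : ℕ∞) ≤ analyticOrderAt f c := by
  have hpow : AnalyticAt ℂ (fun z => (z - c) ^ n) c := by fun_prop
  have horder : analyticOrderAt (fun z => (z - c) ^ n) c = n := analyticOrderAt_centeredMonomial
  rw [analyticOrderAt_congr hfu]
  rw [show (fun z => (z - c) ^ n • u z) = (fun z => (z - c) ^ n) * u from rfl,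
    analyticOrderAt_mul hpow hu, horder, Nat.cast_add, Nat.cast_one]
  gcongr
  exact Order.one_le_iff_ne_zero.2 (hu.analyticOrderAt_ne_zero.2 hu0)

/-- Writing `f = (z - ρ)ⁿ u`, the transformation law under `z ↦ 1 - 1/(3z)` evaluated at its fixed
point `ρ` gives `u ρ = ε (√3 ρ)^(w + 2n) u ρ`. -/
theorem IsFrickeForm.succ_le_analyticOrderAt_rho (hf : IsFrickeForm ε w f)
    (hn : n ≤ analyticOrderAt f rho) (hne : ε * (√3 * rho) ^ (w + 2 * n) ≠ 1) :
    ((n + 1 : ℕ) : ℕ∞) ≤ analyticOrderAt f rho := by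
  obtain ⟨u, hu, hfu⟩ := (natCast_le_analyticOrderAt hf.analyticAt_rho).1 hn
  refine succ_le_analyticOrderAt hu hfu ?_
  have hcont : ContinuousAt (fun z => fricke z + 1) rho :=
    (hasDerivAt_fricke rho_mem_UHP).continuousAt.add continuousAt_const
  have htendsto : Tendsto (fun z => fricke z + 1) (𝓝 rho) (𝓝 rho) := by
    simpa [fricke_rho_add_one] using hcont.tendsto
  have hev : (fun z => u (fricke z + 1)) =ᶠ[𝓝[≠] rho]
      fun z => ε * (√3 * z) ^ (w + n) * (√3 * rho) ^ n * u z := by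
    filter_upwards [mem_nhdsWithin_of_mem_nhds (hfu.and (htendsto.eventually hfu)),
      mem_nhdsWithin_of_mem_nhds (isOpen_UHP.mem_nhds rho_mem_UHP), self_mem_nhdsWithin]
      with z ⟨hfz, hfRz⟩ hz hzrho
    have hz3 := sqrt_three_mul_ne_zero hz
    have hrho3 := sqrt_three_mul_ne_zero rho_mem_UHP
    have htransform := hf.apply_fricke_add_one hz
    rw [hfz, hfRz, fricke_add_one_sub_rho hz, smul_eq_mul, smul_eq_mul, div_pow, mul_pow (√3 * z),
      div_mul_eq_mul_div, div_eq_iff (by positivity)] at htransform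
    refine mul_left_cancel₀ (pow_ne_zero n (sub_ne_zero.2 hzrho)) (htransform.trans ?_)
    ring
  have hcomp : ContinuousAt (fun z => u (fricke z + 1)) rho :=
    ContinuousAt.comp' (by simpa [fricke_rho_add_one] using hu.continuousAt) hcont
  have hu_cont := hu.continuousAt
  have hfix := ((hcomp.eventuallyEq_nhds_iff_eventuallyEq_nhdsNE (by fun_prop)).1 hev).eq_of_nhds
  rw [fricke_rho_add_one] at hfix
  by_contra hu0
  refine hne (mul_right_cancel₀ hu0 ?_)
  linear_combination -hfix

theorem IsFrickeForm.succ_le_analyticOrderAt_rho_of_rhoFactor_pow_ne_one {k j : ℕ}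
    (hf : IsFrickeForm ((-I) ^ k) (3 * k + 2 * j) f) (hn : n ≤ analyticOrderAt f rho)
    (hne : rhoFactor ^ (j + n) ≠ 1) : ((n + 1 : ℕ) : ℕ∞) ≤ analyticOrderAt f rho := by
  refine hf.succ_le_analyticOrderAt_rho hn ?_
  rwa [add_assoc, ← mul_add, neg_I_pow_mul_sqrt_three_mul_rho_pow]

end EllipticPoint

theorem serreM2_rho : serreM2 rho = 0 := by
  have horder := isFrickeForm_serreM2.succ_le_analyticOrderAt_rho (n := 0) (by simp) (by
    rw [show 4 + 2 * 0 = 2 * 2 from rfl, pow_mul, sqrt_three_mul_rho_sq, rhoFactor_sq]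
    exact fun h => rhoFactor_ne_zero (by linear_combination -h))
  exact apply_eq_zero_of_analyticOrderAt_ne_zero
    (Order.one_le_iff_ne_zero.1 (by simpa using horder))

theorem M2minus3_rho : M2minus3 rho = 0 := by
  have horder := isFrickeForm_M2minus3.succ_le_analyticOrderAt_rho (n := 0) (by simp) (by
    rw [show 2 + 2 * 0 = 2 from rfl, sqrt_three_mul_rho_sq]
    exact fun h => rhoFactor_ne_neg_one (by linear_combination -h))
  exact apply_eq_zero_of_analyticOrderAt_ne_zero
    (Order.one_le_iff_ne_zero.1 (by simpa using horder))

theorem analyticOrderAt_serreM2_rho : analyticOrderAt serreM2 rho = 1 := by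
  refine isFrickeForm_serreM2.analyticAt_rho.analyticOrderAt_eq_one_of_zero_deriv_ne_zero
    serreM2_rho ?_
  rw [HasDerivAt.deriv (hasThetaDerivAt_serreM2 rho_mem_UHP), serreM2_rho, M2minus3_rho]
  simp [M6fun_ne_zero rho_mem_UHP, Real.pi_ne_zero]

theorem analyticOrderAt_M2minus3_rho : analyticOrderAt M2minus3 rho = 2 := by
  have hM := isFrickeForm_M2minus3.analyticAt_rho
  have hΔ := isFrickeForm_M6fun.analyticAt_rho
  have hunit : AnalyticAt ℂ (fun z => 1 / 9 * M2minus3 z ^ 3 - 12 * M6fun z) rho := by fun_prop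
  have hunit0 : analyticOrderAt (fun z => 1 / 9 * M2minus3 z ^ 3 - 12 * M6fun z) rho = 0 :=
    hunit.analyticOrderAt_eq_zero.2 (by simp [M2minus3_rho, M6fun_ne_zero rho_mem_UHP])
  have hfactor : serreM2 ^ 2 =ᶠ[𝓝 rho]
      M2minus3 * fun z => 1 / 9 * M2minus3 z ^ 3 - 12 * M6fun z := by
    filter_upwards [isOpen_UHP.mem_nhds rho_mem_UHP] with z hz
    simp only [Pi.pow_apply, Pi.mul_apply, serreM2_sq hz]
    ring
  have horder := analyticOrderAt_congr hfactor
  rw [analyticOrderAt_mul hM hunit, hunit0, add_zero,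
    analyticOrderAt_pow isFrickeForm_serreM2.analyticAt_rho, analyticOrderAt_serreM2_rho] at horder
  simpa using horder.symm

theorem eventually_M2minus3_ne_zero_rho : ∀ᶠ z in 𝓝[≠] rho, M2minus3 z ≠ 0 := by
  have hM := isFrickeForm_M2minus3.analyticAt_rho
  refine hM.eventually_eq_zero_or_eventually_ne_zero.resolve_left ?_
  rw [← analyticOrderAt_eq_top, analyticOrderAt_M2minus3_rho]
  exact ENat.natCast_ne_top 2

/-! ### The linear relation between a form and its Serre derivatives -/

/-- The first coefficient of the second Serre derivative of `f₀ + M₂* f₁`. -/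
def serreFstTwo (w : ℕ) (f₀ f₁ : ℂ → ℂ) : ℂ → ℂ :=
  serreFst (w + 2) (serreFst w f₀ f₁) (serreSnd w f₀ f₁)

/-- The second coefficient of the second Serre derivative of `f₀ + M₂* f₁`. -/
def serreSndTwo (w : ℕ) (f₀ f₁ : ℂ → ℂ) : ℂ → ℂ :=
  serreSnd (w + 2) (serreFst w f₀ f₁) (serreSnd w f₀ f₁)

/-- The Wronskian of `f = f₀ + M₂* f₁`: the determinant of the coefficient pairs of `f` and `∂f`. -/
def serreWronskian (w : ℕ) (f₀ f₁ : ℂ → ℂ) : ℂ → ℂ :=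
  pairDet f₀ f₁ (serreFst w f₀ f₁) (serreSnd w f₀ f₁)

/-- The determinant of the coefficient pairs of `∂²f` and `∂f`, which is the coefficient of `f` in
the linear relation between `f`, `∂f` and `∂²f`. -/
def serreCofactor (w : ℕ) (f₀ f₁ : ℂ → ℂ) : ℂ → ℂ :=
  pairDet (serreFstTwo w f₀ f₁) (serreSndTwo w f₀ f₁) (serreFst w f₀ f₁) (serreSnd w f₀ f₁)

section Wronskian

variable {ε : ℂ} {k w : ℕ} {f₀ f₁ : ℂ → ℂ} {z : ℂ}

theorem serreDeriv_serreDeriv_quasi (h₀ : IsFrickeForm ε (w + 2) f₀) (h₁ : IsFrickeForm ε w f₁)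
    (hz : z ∈ UHP) : serreDeriv (w + 3) (serreDeriv (w + 1) (quasi f₀ f₁)) z =
      quasi (serreFstTwo w f₀ f₁) (serreSndTwo w f₀ f₁) z := by
  have hfirst := serreDeriv_quasi h₀ h₁ hz
  have hsecond := serreDeriv_quasi (h₀.serreFst h₁) (h₀.serreSnd h₁) hz
  have hev : serreDeriv (w + 1) (quasi f₀ f₁) =ᶠ[𝓝 z]
      quasi (serreFst w f₀ f₁) (serreSnd w f₀ f₁) :=
    eventually_of_mem (isOpen_UHP.mem_nhds hz) fun _ => serreDeriv_quasi h₀ h₁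
  rw [serreFstTwo, serreSndTwo, ← hsecond, serreDeriv, theta, hev.deriv_eq, hfirst, serreDeriv,
    theta]
  push_cast
  ring

theorem serreWronskian_eq (h₀ : IsFrickeForm ε (w + 2) f₀) (h₁ : IsFrickeForm ε w f₁)
    (hz : z ∈ UHP) : serreWronskian w f₀ f₁ z =
      quasi f₀ f₁ z * theta f₁ z - f₁ z * theta (quasi f₀ f₁) z + quasi f₀ f₁ z ^ 2 / 6 := by
  rw [serreWronskian, pairDet_eq_quasi_mul_sub, ← serreDeriv_quasi h₀ h₁ hz, serreSnd, serreDeriv,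
    serreDeriv, quasi]
  ring

theorem IsFrickeForm.serreWronskian (h₀ : IsFrickeForm ε (w + 2) f₀) (h₁ : IsFrickeForm ε w f₁) :
    IsFrickeForm (ε ^ 2) (2 * w + 4) (serreWronskian w f₀ f₁) :=
  (h₀.pairDet h₁ (h₀.serreFst h₁) (h₀.serreSnd h₁)).cast (sq ε).symm (by ring)

theorem IsFrickeForm.serreCofactor (h₀ : IsFrickeForm ε (w + 2) f₀) (h₁ : IsFrickeForm ε w f₁) :
    IsFrickeForm (ε ^ 2) (2 * w + 8) (serreCofactor w f₀ f₁) :=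
  (((h₀.serreFst h₁).serreFst (h₀.serreSnd h₁)).pairDet
    ((h₀.serreFst h₁).serreSnd (h₀.serreSnd h₁)) (h₀.serreFst h₁) (h₀.serreSnd h₁)).cast
    (sq ε).symm (by ring)

theorem hasThetaDerivAt_serreWronskian (h₀ : IsFrickeForm ε (w + 2) f₀)
    (h₁ : IsFrickeForm ε w f₁) (hz : z ∈ UHP) :
    HasThetaDerivAt (serreWronskian w f₀ f₁)
      (pairDet f₀ f₁ (serreFstTwo w f₀ f₁) (serreSndTwo w f₀ f₁) z
        + (w + 2) / 3 * M2star3 z * serreWronskian w f₀ f₁ z) z :=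
  (hasThetaDerivAt_pairDet_serre h₀ h₁ (h₀.serreFst h₁) (h₀.serreSnd h₁) hz).congr_theta (by
    simp only [serreWronskian, serreFstTwo, serreSndTwo, pairDet]
    ring)

theorem hasThetaDerivAt_M6fun_pow (n : ℕ) (hz : z ∈ UHP) :
    HasThetaDerivAt (fun z => M6fun z ^ n) (n * M2star3 z * M6fun z ^ n) z :=
  ((hasThetaDerivAt_M6fun hz).pow n).congr_theta (by
    cases n with
    | zero => simp
    | succ n =>
      rw [Nat.add_sub_cancel, pow_succ]
      ring)

theorem M2minus3_mul_pairDet_serreTwo {C : ℂ} (h₀ : IsFrickeForm ε (3 * k + 2) f₀)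
    (h₁ : IsFrickeForm ε (3 * k) f₁)
    (hW : ∀ z ∈ UHP, serreWronskian (3 * k) f₀ f₁ z = C * (M2minus3 z ^ 2 * M6fun z ^ k))
    (hz : z ∈ UHP) :
    M2minus3 z * pairDet f₀ f₁ (serreFstTwo (3 * k) f₀ f₁) (serreSndTwo (3 * k) f₀ f₁) z =
      2 * serreM2 z * serreWronskian (3 * k) f₀ f₁ z := by
  have htheta := (((((hasThetaDerivAt_M2minus3 hz).pow 2).mul
    (hasThetaDerivAt_M6fun_pow k hz)).const_mul C).congr_of_eqOn hz hW).theta_eq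
  rw [(hasThetaDerivAt_serreWronskian h₀ h₁ hz).theta_eq, hW z hz] at htheta
  rw [hW z hz]
  push_cast at htheta
  linear_combination M2minus3 z * htheta

/-- Cramer's rule for `∂²f` in terms of `f` and `∂f`. -/
theorem M2minus3_mul_serreWronskian_mul {C : ℂ} (h₀ : IsFrickeForm ε (3 * k + 2) f₀)
    (h₁ : IsFrickeForm ε (3 * k) f₁)
    (hW : ∀ z ∈ UHP, serreWronskian (3 * k) f₀ f₁ z = C * (M2minus3 z ^ 2 * M6fun z ^ k))
    (hz : z ∈ UHP) :
    M2minus3 z * serreWronskian (3 * k) f₀ f₁ z * serreFstTwo (3 * k) f₀ f₁ z =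
        M2minus3 z * serreCofactor (3 * k) f₀ f₁ z * f₀ z
          + 2 * serreM2 z * serreWronskian (3 * k) f₀ f₁ z * serreFst (3 * k) f₀ f₁ z ∧
      M2minus3 z * serreWronskian (3 * k) f₀ f₁ z * serreSndTwo (3 * k) f₀ f₁ z =
        M2minus3 z * serreCofactor (3 * k) f₀ f₁ z * f₁ z
          + 2 * serreM2 z * serreWronskian (3 * k) f₀ f₁ z * serreSnd (3 * k) f₀ f₁ z := by
  have hdet := M2minus3_mul_pairDet_serreTwo h₀ h₁ hW hz
  rw [← hdet]
  simp only [serreWronskian, serreCofactor, pairDet]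
  constructor <;> ring

theorem serreTwo_sub_eq_of_serreWronskian_eq {C α β : ℂ} (h₀ : IsFrickeForm ε (3 * k + 2) f₀)
    (h₁ : IsFrickeForm ε (3 * k) f₁)
    (hW : ∀ z ∈ UHP, serreWronskian (3 * k) f₀ f₁ z = C * (M2minus3 z ^ 2 * M6fun z ^ k))
    (hH : ∀ z ∈ UHP, serreCofactor (3 * k) f₀ f₁ z =
      (α * M2minus3 z ^ 4 + β * (M2minus3 z * M6fun z)) * M6fun z ^ k)
    (hz : z ∈ UHP) (hM : M2minus3 z ≠ 0) :
    C * (M2minus3 z * serreFstTwo (3 * k) f₀ f₁ z - 2 * serreM2 z * serreFst (3 * k) f₀ f₁ z) =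
        (α * M2minus3 z ^ 3 + β * M6fun z) * f₀ z ∧
      C * (M2minus3 z * serreSndTwo (3 * k) f₀ f₁ z - 2 * serreM2 z * serreSnd (3 * k) f₀ f₁ z) =
        (α * M2minus3 z ^ 3 + β * M6fun z) * f₁ z := by
  obtain ⟨hfst, hsnd⟩ := M2minus3_mul_serreWronskian_mul h₀ h₁ hW hz
  rw [hW z hz, hH z hz] at hfst hsnd
  have hne : M2minus3 z ^ 2 * M6fun z ^ k ≠ 0 :=
    mul_ne_zero (pow_ne_zero _ hM) (pow_ne_zero _ (M6fun_ne_zero hz))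
  exact ⟨mul_left_cancel₀ hne (by linear_combination hfst),
    mul_left_cancel₀ hne (by linear_combination hsnd)⟩

end Wronskian

/-! ### Extremal forms -/

/-- `f₀ + M₂* f₁` is an extremal quasimodular form of weight `3k + 2` and depth one for the
character `χᵏ`; its vanishing order `k` at the cusp is witnessed by `f₀ + M₂* f₁ = qᵏ g(q)` with
`g 0 ≠ 0`. -/
structure IsExtremal (k : ℕ) (f₀ f₁ g : ℂ → ℂ) : Prop where
  fst : IsFrickeForm ((-I) ^ k) (3 * k + 2) f₀
  snd : IsFrickeForm ((-I) ^ k) (3 * k) f₁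
  differentiableOn : DifferentiableOn ℂ g (ball 0 1)
  quasi_eq : ∀ z ∈ UHP, quasi f₀ f₁ z = qexp z ^ k * g (qexp z)
  apply_zero_ne_zero : g 0 ≠ 0

theorem apply_add_one_of_hasThetaDerivAt_const {u : ℂ → ℂ} {c z : ℂ} {Y : ℝ}
    (hu : ∀ z : ℂ, Y < z.im → HasThetaDerivAt u c z) (hz : Y < z.im) :
    u (z + 1) = u z + 2 * Real.pi * I * c := by
  have hconvex : Convex ℝ {z : ℂ | Y < z.im} := convex_halfSpace_im_gt Y
  have hderiv (w : ℂ) (hw : Y < w.im) :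
      HasDerivAt (fun w => u w - 2 * Real.pi * I * c * w) 0 w := by
    exact (HasDerivAt.sub (hu w hw) ((hasDerivAt_id w).const_mul (2 * Real.pi * I * c))).congr_deriv
      (by simp)
  have hconst := hconvex.norm_image_sub_le_of_norm_hasDerivWithin_le (C := 0)
    (fun w hw => (hderiv w hw).hasDerivWithinAt) (by simp) hz
    (show z + 1 ∈ {z : ℂ | Y < z.im} by simpa using hz)
  rw [zero_mul, norm_le_zero_iff] at hconst
  linear_combination hconst

theorem exists_forall_im_gt_ne_zero {g : ℂ → ℂ} (hg : ContinuousAt g 0) (hg0 : g 0 ≠ 0) :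
    ∃ Y, 0 ≤ Y ∧ ∀ z : ℂ, Y < z.im → g (qexp z) ≠ 0 := by
  have htendsto : Tendsto qexp (comap im atTop) (𝓝 0) := by
    rw [funext qexp_eq_qParam]
    exact (Function.Periodic.qParam_tendsto one_pos).mono_right nhdsWithin_le_nhds
  obtain ⟨Y, -, hY⟩ := ((atTop_basis_Ioi.comap im).eventually_iff).1
    (htendsto.eventually (hg.eventually_ne hg0))
  exact ⟨max Y 0, le_max_right _ _, fun z hz => hY ((le_max_left _ _).trans_lt hz)⟩

theorem apply_zero_eq_of_qexp_pow_mul_eq {F G : ℂ → ℂ} {n : ℕ} (hF : ContinuousAt F 0)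
    (hG : ContinuousAt G 0)
    (h : ∀ z ∈ UHP, qexp z ^ n * F (qexp z) = qexp z ^ n * G (qexp z)) : F 0 = G 0 := by
  refine ((hF.eventuallyEq_nhds_iff_eventuallyEq_nhdsNE hG).1 ?_).eq_of_nhds
  filter_upwards [mem_nhdsWithin_of_mem_nhds (ball_mem_nhds 0 one_pos), self_mem_nhdsWithin]
    with q hq hq0
  obtain ⟨z, hz, rfl, -⟩ := exists_qexp_eq hq0 (mem_ball_zero_iff.1 hq)
  exact mul_left_cancel₀ (pow_ne_zero n hq0) (h z hz)

theorem neg_I_pow_sq (k : ℕ) : ((-I) ^ k) ^ 2 = (-1) ^ k := by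
  rw [← pow_mul, mul_comm, pow_mul, neg_sq, I_sq]

namespace IsExtremal

variable {k : ℕ} {f₀ f₁ g : ℂ → ℂ} {C α β z : ℂ}

theorem hasQExpansion (h : IsExtremal k f₀ f₁ g) :
    HasQExpansion (quasi f₀ f₁) fun q => q ^ k * g q :=
  ⟨(differentiableOn_id.pow k).mul h.differentiableOn, h.quasi_eq⟩

theorem exists_serreDeriv_eq (h : IsExtremal k f₀ f₁ g) :
    ∃ g', DifferentiableOn ℂ g' (ball 0 1) ∧ g' 0 = (3 * k - 1) / 6 * g 0 ∧ ∀ z ∈ UHP,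
      quasi (serreFst (3 * k) f₀ f₁) (serreSnd (3 * k) f₀ f₁) z = qexp z ^ k * g' (qexp z) := by
  obtain ⟨g', hg', hg'0, hfg'⟩ :=
    exists_serreDeriv_eq_qexp_pow_mul ((3 * k : ℕ) + 1) h.differentiableOn h.quasi_eq
  refine ⟨g', hg', ?_, fun z hz => by rw [← serreDeriv_quasi h.fst h.snd hz, hfg' z hz]⟩
  rw [hg'0]
  push_cast
  ring

theorem exists_serreDeriv_two_eq (h : IsExtremal k f₀ f₁ g) :
    ∃ g', DifferentiableOn ℂ g' (ball 0 1) ∧ g' 0 = (k - 1) / 2 * ((3 * k - 1) / 6 * g 0) ∧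
      ∀ z ∈ UHP, quasi (serreFstTwo (3 * k) f₀ f₁) (serreSndTwo (3 * k) f₀ f₁) z =
        qexp z ^ k * g' (qexp z) := by
  obtain ⟨g₁, hg₁, hg₁0, hfg₁⟩ := h.exists_serreDeriv_eq
  obtain ⟨g₂, hg₂, hg₂0, hfg₂⟩ :=
    exists_serreDeriv_eq_qexp_pow_mul ((3 * k + 2 : ℕ) + 1) hg₁ hfg₁
  refine ⟨g₂, hg₂, ?_, fun z hz => ?_⟩
  · rw [hg₂0, hg₁0]
    push_cast
    ring
  · rw [serreFstTwo, serreSndTwo, ← serreDeriv_quasi (h.fst.serreFst h.snd)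
      (h.fst.serreSnd h.snd) hz, hfg₂ z hz]

theorem exists_serreWronskian_eq (h : IsExtremal k f₀ f₁ g) : ∃ C, ∀ z ∈ UHP,
    serreWronskian (3 * k) f₀ f₁ z = C * (M2minus3 z ^ 2 * M6fun z ^ k) := by
  obtain ⟨g₁, hg₁, -, hfg₁⟩ := h.exists_serreDeriv_eq
  obtain ⟨D, hD, hWD⟩ := exists_pairDet_eq_qexp_pow_mul h.differentiableOn hg₁ h.quasi_eq hfg₁
    h.snd (h.fst.serreSnd h.snd)
  exact ⟨D 0, fun z hz => ((h.fst.serreWronskian h.snd).cast (neg_I_pow_sq k)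
    (by ring)).eq_mul_M2minus3_sq_mul hD hWD hz⟩

theorem exists_serreCofactor_eq (h : IsExtremal k f₀ f₁ g) : ∃ α β, ∀ z ∈ UHP,
    serreCofactor (3 * k) f₀ f₁ z =
      (α * M2minus3 z ^ 4 + β * (M2minus3 z * M6fun z)) * M6fun z ^ k := by
  obtain ⟨g₁, hg₁, -, hfg₁⟩ := h.exists_serreDeriv_eq
  obtain ⟨g₂, hg₂, -, hfg₂⟩ := h.exists_serreDeriv_two_eq
  obtain ⟨D, hD, hHD⟩ := exists_pairDet_eq_qexp_pow_mul hg₂ hg₁ hfg₂ hfg₁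
    ((h.fst.serreFst h.snd).serreSnd (h.fst.serreSnd h.snd)) (h.fst.serreSnd h.snd)
  exact ⟨D 0, ((h.fst.serreCofactor h.snd).cast (neg_I_pow_sq k)
    (by ring)).exists_eq_mul_M6fun_pow hD hHD⟩

/-- Otherwise `θ(f₁ / f) = -1/6` near the cusp, contradicting the periodicity of `f₁ / f`. -/
theorem exists_serreWronskian_ne_zero (h : IsExtremal k f₀ f₁ g) :
    ∃ z ∈ UHP, serreWronskian (3 * k) f₀ f₁ z ≠ 0 := by
  by_contra! hW
  obtain ⟨Y, hY0, hY⟩ := exists_forall_im_gt_ne_zero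
    (h.differentiableOn.continuousOn.continuousAt (ball_mem_nhds 0 one_pos)) h.apply_zero_ne_zero
  have hquot (z : ℂ) (hz : Y < z.im) :
      HasThetaDerivAt (fun z => f₁ z / quasi f₀ f₁ z) (-1 / 6) z := by
    have hzU : z ∈ UHP := hY0.trans_lt hz
    have hf : quasi f₀ f₁ z ≠ 0 := by
      rw [h.quasi_eq z hzU]
      exact mul_ne_zero (pow_ne_zero _ (qexp_ne_zero z)) (hY z hz)
    refine ((h.snd.hasThetaDerivAt hzU).div (h.hasQExpansion.hasThetaDerivAt hzU) hf).congr_theta ?_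
    have hzero := hW z hzU
    rw [serreWronskian_eq h.fst h.snd hzU] at hzero
    rw [div_eq_iff (pow_ne_zero 2 hf)]
    linear_combination hzero
  obtain ⟨F₁, hF₁⟩ := h.snd.exists_qExpansion
  have him : Y < (((Y + 1 : ℝ) : ℂ) * I).im := by simp
  have hshift := apply_add_one_of_hasThetaDerivAt_const hquot him
  rw [hF₁.apply_add_one (hY0.trans_lt him), h.hasQExpansion.apply_add_one (hY0.trans_lt him)]
    at hshift
  exact two_pi_I_ne_zero (by linear_combination 6 * hshift)

theorem serreTwo_quasi_eq (h : IsExtremal k f₀ f₁ g)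
    (hW : ∀ z ∈ UHP, serreWronskian (3 * k) f₀ f₁ z = C * (M2minus3 z ^ 2 * M6fun z ^ k))
    (hH : ∀ z ∈ UHP, serreCofactor (3 * k) f₀ f₁ z =
      (α * M2minus3 z ^ 4 + β * (M2minus3 z * M6fun z)) * M6fun z ^ k) (hz : z ∈ UHP) :
    C * M2minus3 z ^ 3 * quasi (serreFstTwo (3 * k) f₀ f₁) (serreSndTwo (3 * k) f₀ f₁) z =
      (α * M2minus3 z ^ 5 + β * (M2minus3 z ^ 2 * M6fun z)) * quasi f₀ f₁ z
      + 2 * C * (serreM2 z * M2minus3 z ^ 2) *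
        quasi (serreFst (3 * k) f₀ f₁) (serreSnd (3 * k) f₀ f₁) z := by
  obtain ⟨hfst, hsnd⟩ := M2minus3_mul_serreWronskian_mul h.fst h.snd hW hz
  rw [hW z hz, hH z hz] at hfst hsnd
  refine mul_left_cancel₀ (pow_ne_zero k (M6fun_ne_zero hz)) ?_
  simp only [quasi]
  linear_combination hfst + M2star3 z * hsnd

/-- Comparison of the coefficients of `qᵏ` in the relation between `f`, `∂f` and `∂²f`. -/
theorem cofactor_coeff_eq (h : IsExtremal k f₀ f₁ g)
    (hW : ∀ z ∈ UHP, serreWronskian (3 * k) f₀ f₁ z = C * (M2minus3 z ^ 2 * M6fun z ^ k))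
    (hH : ∀ z ∈ UHP, serreCofactor (3 * k) f₀ f₁ z =
      (α * M2minus3 z ^ 4 + β * (M2minus3 z * M6fun z)) * M6fun z ^ k) :
    α = C * (k ^ 2 / 4 - 1 / 36) := by
  obtain ⟨g₁, hg₁, hg₁0, hfg₁⟩ := h.exists_serreDeriv_eq
  obtain ⟨g₂, hg₂, hg₂0, hfg₂⟩ := h.exists_serreDeriv_two_eq
  obtain ⟨M, hM, hM0, -⟩ := hasQCoeffs_M2minus3
  obtain ⟨N, hN, hN0, -⟩ := hasQCoeffs_serreM2
  obtain ⟨Δ, hΔ, hΔ0, -⟩ := hasQCoeffs_M6fun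
  have hball : ball (0 : ℂ) 1 ∈ 𝓝 0 := ball_mem_nhds 0 one_pos
  have hgc := h.differentiableOn.continuousOn.continuousAt hball
  have hg₁c := hg₁.continuousOn.continuousAt hball
  have hg₂c := hg₂.continuousOn.continuousAt hball
  have hMc := hM.differentiableOn.continuousOn.continuousAt hball
  have hNc := hN.differentiableOn.continuousOn.continuousAt hball
  have hΔc := hΔ.differentiableOn.continuousOn.continuousAt hball
  have hlead := apply_zero_eq_of_qexp_pow_mul_eq (n := k)
    (F := fun q => C * M q ^ 3 * g₂ q)
    (G := fun q => (α * M q ^ 5 + β * (M q ^ 2 * Δ q)) * g q + 2 * C * (N q * M q ^ 2) * g₁ q)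
    (by fun_prop) (by fun_prop) fun z hz => by
      have hrel := h.serreTwo_quasi_eq hW hH hz
      rw [hfg₂ z hz, hfg₁ z hz, h.quasi_eq z hz, hM.eq_comp z hz, hN.eq_comp z hz,
        hΔ.eq_comp z hz] at hrel
      linear_combination hrel
  simp only [hM0, hN0, hΔ0, hg₁0, hg₂0] at hlead
  refine mul_right_cancel₀ h.apply_zero_ne_zero ?_
  linear_combination -hlead

theorem coeff_mul_snd_rho_eq_zero (h : IsExtremal k f₀ f₁ g)
    (hW : ∀ z ∈ UHP, serreWronskian (3 * k) f₀ f₁ z = C * (M2minus3 z ^ 2 * M6fun z ^ k))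
    (hH : ∀ z ∈ UHP, serreCofactor (3 * k) f₀ f₁ z =
      (α * M2minus3 z ^ 4 + β * (M2minus3 z * M6fun z)) * M6fun z ^ k) :
    β * f₁ rho = 0 := by
  have hb := ((h.fst.serreFst h.snd).serreSnd (h.fst.serreSnd h.snd)).analyticAt_rho.continuousAt
  have ha := (h.fst.serreSnd h.snd).analyticAt_rho.continuousAt
  have hf := h.snd.analyticAt_rho.continuousAt
  have hM := isFrickeForm_M2minus3.analyticAt_rho.continuousAt
  have hN := isFrickeForm_serreM2.analyticAt_rho.continuousAt
  have hΔ := isFrickeForm_M6fun.analyticAt_rho.continuousAt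
  rw [← serreSndTwo] at hb
  have hev : (fun z => C * (M2minus3 z * serreSndTwo (3 * k) f₀ f₁ z
        - 2 * serreM2 z * serreSnd (3 * k) f₀ f₁ z)) =ᶠ[𝓝[≠] rho]
      fun z => (α * M2minus3 z ^ 3 + β * M6fun z) * f₁ z := by
    filter_upwards [eventually_M2minus3_ne_zero_rho,
      mem_nhdsWithin_of_mem_nhds (isOpen_UHP.mem_nhds rho_mem_UHP)] with z hMz hz
    exact (serreTwo_sub_eq_of_serreWronskian_eq h.fst h.snd hW hH hz hMz).2
  have hrho := ((ContinuousAt.eventuallyEq_nhds_iff_eventuallyEq_nhdsNE (by fun_prop)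
    (by fun_prop)).1 hev).eq_of_nhds
  simpa [M2minus3_rho, serreM2_rho, M6fun_ne_zero rho_mem_UHP] using hrho

theorem five_le_analyticOrderAt_serreWronskian (h : IsExtremal k f₀ f₁ g) (hrho : f₁ rho = 0) :
    5 ≤ analyticOrderAt (serreWronskian (3 * k) f₀ f₁) rho := by
  have ha₀ := h.fst.serreFst h.snd
  have ha₁ := h.fst.serreSnd h.snd
  have one_le_f₁ : ((1 : ℕ) : ℕ∞) ≤ analyticOrderAt f₁ rho := by
    rw [Nat.cast_one, Order.one_le_iff_ne_zero]
    exact h.snd.analyticAt_rho.analyticOrderAt_ne_zero.2 hrho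
  have two_le_f₁ := h.snd.succ_le_analyticOrderAt_rho_of_rhoFactor_pow_ne_one (j := 0) one_le_f₁
    (by simpa using rhoFactor_ne_one)
  have three_le_f₁ := h.snd.succ_le_analyticOrderAt_rho_of_rhoFactor_pow_ne_one (j := 0) two_le_f₁
    rhoFactor_sq_ne_one
  have one_le_f₀ := h.fst.succ_le_analyticOrderAt_rho_of_rhoFactor_pow_ne_one (j := 1) (n := 0)
    bot_le (by simpa using rhoFactor_ne_one)
  have two_le_f₀ := h.fst.succ_le_analyticOrderAt_rho_of_rhoFactor_pow_ne_one (j := 1) one_le_f₀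
    rhoFactor_sq_ne_one
  have three_le_f₀ := h.fst.succ_le_analyticOrderAt_rho_of_rhoFactor_pow_ne_one (j := 1) two_le_f₀
    rhoFactor_cube_ne_one
  have one_le_a₀ := ha₀.succ_le_analyticOrderAt_rho_of_rhoFactor_pow_ne_one (j := 2) (n := 0)
    bot_le rhoFactor_sq_ne_one
  have two_le_a₀ := ha₀.succ_le_analyticOrderAt_rho_of_rhoFactor_pow_ne_one (j := 2) one_le_a₀
    rhoFactor_cube_ne_one
  have one_le_a₁ := ha₁.succ_le_analyticOrderAt_rho_of_rhoFactor_pow_ne_one (j := 1) (n := 0)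
    bot_le (by simpa using rhoFactor_ne_one)
  have two_le_a₁ := ha₁.succ_le_analyticOrderAt_rho_of_rhoFactor_pow_ne_one (j := 1) one_le_a₁
    rhoFactor_sq_ne_one
  have five_eq : (5 : ℕ∞) = ((2 + 1 : ℕ) : ℕ∞) + ((1 + 1 : ℕ) : ℕ∞) := by norm_num
  refine le_trans (le_min ?_ ?_) (le_analyticOrderAt_sub
    (f := f₀ * serreSnd (3 * k) f₀ f₁) (g := f₁ * serreFst (3 * k) f₀ f₁))
  · rw [analyticOrderAt_mul h.fst.analyticAt_rho ha₁.analyticAt_rho, five_eq]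
    exact add_le_add three_le_f₀ two_le_a₁
  · rw [analyticOrderAt_mul h.snd.analyticAt_rho ha₀.analyticAt_rho, five_eq]
    exact add_le_add three_le_f₁ two_le_a₀

theorem analyticOrderAt_serreWronskian (hC : C ≠ 0)
    (hW : ∀ z ∈ UHP, serreWronskian (3 * k) f₀ f₁ z = C * (M2minus3 z ^ 2 * M6fun z ^ k)) :
    analyticOrderAt (serreWronskian (3 * k) f₀ f₁) rho = 4 := by
  have hM := isFrickeForm_M2minus3.analyticAt_rho
  have hunit : AnalyticAt ℂ (fun z => C * M6fun z ^ k) rho :=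
    analyticAt_const.mul (isFrickeForm_M6fun.analyticAt_rho.pow k)
  have hunit0 : analyticOrderAt (fun z => C * M6fun z ^ k) rho = 0 :=
    hunit.analyticOrderAt_eq_zero.2 (by simp [hC, M6fun_ne_zero rho_mem_UHP])
  have hfactor : serreWronskian (3 * k) f₀ f₁ =ᶠ[𝓝 rho]
      M2minus3 ^ 2 * fun z => C * M6fun z ^ k := by
    filter_upwards [isOpen_UHP.mem_nhds rho_mem_UHP] with z hz
    rw [hW z hz, Pi.mul_apply, Pi.pow_apply]
    ring
  rw [analyticOrderAt_congr hfactor, analyticOrderAt_mul (hM.pow 2) hunit, hunit0, add_zero,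
    analyticOrderAt_pow hM, analyticOrderAt_M2minus3_rho]
  norm_num

theorem serre_equation (h : IsExtremal k f₀ f₁ g) (hz : z ∈ UHP) (hM : M2minus3 z ≠ 0) :
    M2minus3 z * serreDeriv (3 * k + 3) (serreDeriv (3 * k + 1) (quasi f₀ f₁)) z
        - 2 * serreM2 z * serreDeriv (3 * k + 1) (quasi f₀ f₁) z =
      (k ^ 2 / 4 - 1 / 36) * M2minus3 z ^ 3 * quasi f₀ f₁ z := by
  obtain ⟨C, hW⟩ := h.exists_serreWronskian_eq
  obtain ⟨α, β, hH⟩ := h.exists_serreCofactor_eq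
  have hC : C ≠ 0 := by
    rintro rfl
    obtain ⟨z, hz, hne⟩ := h.exists_serreWronskian_ne_zero
    exact hne (by rw [hW z hz, zero_mul])
  have hβ : β = 0 := by
    refine (mul_eq_zero.1 (h.coeff_mul_snd_rho_eq_zero hW hH)).resolve_right fun hrho => ?_
    have horder := h.five_le_analyticOrderAt_serreWronskian hrho
    rw [analyticOrderAt_serreWronskian hC hW] at horder
    exact absurd horder (by norm_num)
  obtain ⟨hfst, hsnd⟩ := serreTwo_sub_eq_of_serreWronskian_eq h.fst h.snd hW hH hz hM
  rw [hβ, h.cofactor_coeff_eq hW hH] at hfst hsnd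
  have hone := serreDeriv_quasi h.fst h.snd hz
  have htwo := serreDeriv_serreDeriv_quasi h.fst h.snd hz
  push_cast at hone htwo
  rw [hone, htwo]
  refine mul_left_cancel₀ hC ?_
  simp only [quasi]
  linear_combination hfst + M2star3 z * hsnd

end IsExtremal

/-! ### The normalised differential equation -/

section NormalForm

variable {k : ℕ} {f F : ℂ → ℂ} {z : ℂ}

theorem deriv_deriv_eq_theta_theta (f : ℂ → ℂ) (z : ℂ) :
    deriv (deriv f) z = -(4 * (Real.pi : ℂ) ^ 2) * theta (theta f) z := by
  have hfun : theta f = fun z => deriv f z / (2 * Real.pi * I) := rfl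
  rw [theta, hfun, deriv_div_const]
  field_simp
  linear_combination 4 * deriv (deriv f) z * I_sq

theorem hasThetaDerivAt_div_Pfun3_mul_M2minus3 (hf : HasQExpansion f F) (hz : z ∈ UHP)
    (hM : M2minus3 z ≠ 0) :
    HasThetaDerivAt (fun z => f z / (Pfun3 k z * M2minus3 z))
      ((M2minus3 z * serreDeriv (3 * k + 1) f z - serreM2 z * f z
        - 1 / 6 * (M2star3 z * M2minus3 z * f z)) / (Pfun3 k z * M2minus3 z ^ 2)) z := by
  have hP := Pfun3_ne_zero k hz
  refine ((hf.hasThetaDerivAt hz).div ((hasThetaDerivAt_Pfun3 k hz).mul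
    (hasThetaDerivAt_M2minus3 hz)) (mul_ne_zero hP hM)).congr_theta ?_
  rw [serreDeriv]
  field_simp
  ring

theorem theta_theta_div_Pfun3_mul_M2minus3 (hf : HasQExpansion f F) (hz : z ∈ UHP)
    (hM : M2minus3 z ≠ 0)
    (heq : M2minus3 z * serreDeriv (3 * k + 3) (serreDeriv (3 * k + 1) f) z
        - 2 * serreM2 z * serreDeriv (3 * k + 1) f z =
      (k ^ 2 / 4 - 1 / 36) * M2minus3 z ^ 3 * f z) :
    theta (theta fun z => f z / (Pfun3 k z * M2minus3 z)) z =
      ((k / 2) ^ 2 * M4plus3 z - 18 * M6fun z / M2minus3 z) *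
        (f z / (Pfun3 k z * M2minus3 z)) := by
  obtain ⟨G, hG⟩ := hf.exists_serreDeriv (3 * k + 1)
  have hP := Pfun3_ne_zero k hz
  have hMz := hasThetaDerivAt_M2minus3 hz
  have hfz := hf.hasThetaDerivAt hz
  have hfirst : (theta fun z => f z / (Pfun3 k z * M2minus3 z)) =ᶠ[𝓝 z] fun z =>
      (M2minus3 z * serreDeriv (3 * k + 1) f z - serreM2 z * f z
        - 1 / 6 * (M2star3 z * M2minus3 z * f z)) / (Pfun3 k z * M2minus3 z ^ 2) := by
    filter_upwards [isOpen_UHP.mem_nhds hz, hMz.continuousAt.eventually_ne hM] with w hw hMw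
    exact (hasThetaDerivAt_div_Pfun3_mul_M2minus3 hf hw hMw).theta_eq
  have hsecond := ((((hMz.mul (hG.hasThetaDerivAt hz)).sub
    ((hasThetaDerivAt_serreM2 hz).mul hfz)).sub
      ((((hasThetaDerivAt_M2star3 hz).mul hMz).mul hfz).const_mul (1 / 6))).div
    ((hasThetaDerivAt_Pfun3 k hz).mul (hMz.pow 2)) (mul_ne_zero hP (pow_ne_zero 2 hM))).theta_eq
  rw [theta, hfirst.deriv_eq, ← theta, hsecond, M4plus3_eq_sq hz,
    theta_eq_serreDeriv_add (3 * k + 3) (serreDeriv (3 * k + 1) f),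
    theta_eq_serreDeriv_add (3 * k + 1) f]
  generalize serreDeriv (3 * k + 3) (serreDeriv (3 * k + 1) f) z = D₂ at heq ⊢
  generalize serreDeriv (3 * k + 1) f z = D₁ at heq ⊢
  push_cast
  field_simp
  linear_combination 3888 * M2minus3 z * heq + 7776 * f z * serreM2_sq hz

end NormalForm

end FrickeThree

/-- Theorem: an extremal quasimodular form of weight `3k+2` and depth 1
on `Γ₀⁺(3)` with character `χ^k`, divided by `M₆^{k/2}·M₂`, solves
`y″ = -4π²((k/2)² M₄ - 18 M₆/M₂) y`. -/
theorem extremal_Gamma0plus3_weight3kplus2_MODE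
    (χ : SL2R → ℂ)
    (hχmul : ∀ γ ∈ GammaPlus3, ∀ δ ∈ GammaPlus3, χ (γ * δ) = χ γ * χ δ)
    (hχS : χ S3elt = -Complex.I) (hχR : χ R3elt = -Complex.I)
    (k : ℕ)
    (f₀ f₁ : ℂ → ℂ)
    (hf₀ : MFchar GammaPlus3 (fun γ => χ γ ^ k) (3 * k + 2) f₀)
    (hf₁ : MFchar GammaPlus3 (fun γ => χ γ ^ k) (3 * k) f₁)
    (f : ℂ → ℂ) (hf : ∀ z, f z = f₀ z + M2star3 z * f₁ z)
    (hext : VOrder 1 f (k : ℝ)) :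
    ∀ z ∈ UHP, M2minus3 z ≠ 0 →
      deriv (deriv fun w => f w / (Pfun3 k w * M2minus3 w)) z
        = -(4 * (Real.pi : ℂ) ^ 2) *
            (((k : ℂ) / 2) ^ 2 * M4plus3 z - 18 * M6fun z / M2minus3 z) *
            (f z / (Pfun3 k z * M2minus3 z)) := by
  have h₀ := FrickeThree.isFrickeForm_of_MFchar hχmul hχS hχR (w := 3 * k + 2)
    (by exact_mod_cast hf₀)
  have h₁ := FrickeThree.isFrickeForm_of_MFchar hχmul hχS hχR (w := 3 * k) (by exact_mod_cast hf₁)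
  obtain ⟨F₀, hF₀⟩ := h₀.exists_qExpansion
  obtain ⟨F₁, hF₁⟩ := h₁.exists_qExpansion
  obtain ⟨Φ, hΦ, -⟩ := FrickeThree.hasQCoeffs_M2star3
  obtain rfl : f = FrickeThree.quasi f₀ f₁ := funext hf
  obtain ⟨g, hg, hfg, hg0⟩ := (hF₀.add (hΦ.mul hF₁)).exists_eq_qexp_pow_mul_of_VOrder hext
  have h : FrickeThree.IsExtremal k f₀ f₁ g := ⟨h₀, h₁, hg, hfg, hg0⟩
  intro z hz hM
  rw [FrickeThree.deriv_deriv_eq_theta_theta, FrickeThree.theta_theta_div_Pfun3_mul_M2minus3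
    h.hasQExpansion hz hM (h.serre_equation hz hM), mul_assoc]
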